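/- Let G be a finite group possessing a normal subgroup N with G/N ≅ C_m ⋉_φ C_m for some positive integer m. Then |G| + d(G) ≤ E(G) ≤ |G| + |G|/m + m − 2. -/

import Mathlib

/-- A sequence (multiset) over `G` is product-one if its terms can be ordered so
that their product equals `1`. -/
def IsProductOne {G : Type*} [Group G] (S : Multiset G) : Prop :=
  ∃ l : List G, (l : Multiset G) = S ∧ l.prod = 1

/-- A sequence is product-one free if it has no nonempty product-one subsequence. -/
def ProductOneFree {G : Type*} [Group G] (S : Multiset G) : Prop :=
  ∀ T ≤ S, T ≠ 0 → ¬ IsProductOne T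

section Aux

open scoped Pointwise

theorem kemp_core {G : Type*} [Group G] [DecidableEq G] [Fintype G] :
    ∀ (s t : ℕ) (A B : Finset G), 2 * Fintype.card G - (A.card + B.card) ≤ s → B.card ≤ t →
      1 ∈ A → 1 ∈ B → (∀ a ∈ A, ∀ b ∈ B, a * b = 1 → a = 1 ∧ b = 1) →
      A.card + B.card ≤ (A * B).card + 1 := by
  intro s
  induction s using Nat.strong_induction_on with
  | _ s ihs =>
  intro t
  induction t using Nat.strong_induction_on with
  | _ t iht =>
  intro A B hs ht hA hB hu
  by_cases hx : ∃ x ∈ A ∩ B, x ≠ 1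
  · obtain ⟨x, hx, hx1⟩ := hx
    obtain ⟨hxA, hxB⟩ := Finset.mem_inter.1 hx
    have hxB' : x⁻¹ ∉ B := fun h => hx1 (hu x hxA _ h (by simp)).1
    have hxA' : x⁻¹ ∉ A := fun h => hx1 (hu _ h x hxB (by simp)).2
    -- transformed sets
    have hAc : ∀ C : Finset G, C.card ≤ Fintype.card G := fun C => Finset.card_le_univ C
    set A1 := A ∪ A.image (· * x) with hA1
    set B1 := B ∩ B.image (x⁻¹ * ·) with hB1
    set A2 := A ∩ A.image (· * x⁻¹) with hA2
    set B2 := B ∪ B.image (x * ·) with hB2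
    have cA : A1.card + A2.card = 2 * A.card := by
      have h1 := Finset.card_union_add_card_inter A (A.image (· * x))
      have h2 : (A.image (· * x)).card = A.card :=
        Finset.card_image_of_injective _ (mul_left_injective x)
      have h3 : A2.card = (A ∩ A.image (· * x)).card := by
        rw [← Finset.card_image_of_injective A2 (mul_left_injective x)]
        congr 1
        ext y
        simp only [hA2, Finset.mem_image, Finset.mem_inter]
        constructor
        · rintro ⟨z, ⟨hz, w, hw, rfl⟩, rfl⟩
          exact ⟨by simpa using hw, _, hz, rfl⟩
        · rintro ⟨hy, w, hw, rfl⟩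
          exact ⟨w, ⟨hw, _, hy, by simp⟩, rfl⟩
      rw [h3, hA1]; omega
    have cB : B1.card + B2.card = 2 * B.card := by
      have h1 := Finset.card_union_add_card_inter B (B.image (x * ·))
      have h2 : (B.image (x * ·)).card = B.card :=
        Finset.card_image_of_injective _ (mul_right_injective x)
      have h3 : B1.card = (B ∩ B.image (x * ·)).card := by
        rw [← Finset.card_image_of_injective B1 (mul_right_injective x)]
        congr 1
        ext y
        simp only [hB1, Finset.mem_image, Finset.mem_inter]
        constructor
        · rintro ⟨z, ⟨hz, w, hw, rfl⟩, rfl⟩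
          exact ⟨by simpa using hw, _, hz, rfl⟩
        · rintro ⟨hy, w, hw, rfl⟩
          exact ⟨w, ⟨hw, _, hy, by simp⟩, rfl⟩
      rw [h3, hB2]; omega
    have hB1lt : B1.card < B.card := by
      apply Finset.card_lt_card
      refine ⟨Finset.inter_subset_left, fun h => ?_⟩
      -- B ⊆ x⁻¹ B implies equality hence x⁻¹ ∈ B
      have h2 : B ⊆ B.image (x⁻¹ * ·) := fun y hy => (Finset.mem_inter.1 (h hy)).2
      have h3 : B = B.image (x⁻¹ * ·) := Finset.eq_of_subset_of_card_le h2
        (by rw [Finset.card_image_of_injective _ (mul_right_injective x⁻¹)])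
      apply hxB'
      rw [h3]
      exact Finset.mem_image.2 ⟨1, hB, by simp⟩
    have m1 : A1 * B1 ⊆ A * B := by
      intro y hy
      obtain ⟨a, ha, b, hb, rfl⟩ := Finset.mem_mul.1 hy
      obtain ⟨hb1, hb2⟩ := Finset.mem_inter.1 hb
      rcases Finset.mem_union.1 ha with ha | ha
      · exact Finset.mul_mem_mul ha hb1
      · obtain ⟨a', ha', rfl⟩ := Finset.mem_image.1 ha
        obtain ⟨b', hb', rfl⟩ := Finset.mem_image.1 hb2
        have : a' * x * (x⁻¹ * b') = a' * b' := by group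
        simp only [this]
        exact Finset.mul_mem_mul ha' hb'
    have m2 : A2 * B2 ⊆ A * B := by
      intro y hy
      obtain ⟨a, ha, b, hb, rfl⟩ := Finset.mem_mul.1 hy
      obtain ⟨ha1, ha2⟩ := Finset.mem_inter.1 ha
      rcases Finset.mem_union.1 hb with hb | hb
      · exact Finset.mul_mem_mul ha1 hb
      · obtain ⟨a', ha', rfl⟩ := Finset.mem_image.1 ha2
        obtain ⟨b', hb', rfl⟩ := Finset.mem_image.1 hb
        have : a' * x⁻¹ * (x * b') = a' * b' := by group
        simp only [this]
        exact Finset.mul_mem_mul ha' hb'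
    by_cases hc : A.card + B.card ≤ A1.card + B1.card
    · have u1 : ∀ a ∈ A1, ∀ b ∈ B1, a * b = 1 → a = 1 ∧ b = 1 := by
        intro a ha b hb hab
        obtain ⟨hb1, hb2⟩ := Finset.mem_inter.1 hb
        rcases Finset.mem_union.1 ha with ha | ha
        · exact hu a ha b hb1 hab
        · obtain ⟨a', ha', rfl⟩ := Finset.mem_image.1 ha
          obtain ⟨b', hb', rfl⟩ := Finset.mem_image.1 hb2
          have : a' * x * (x⁻¹ * b') = a' * b' := by group
          simp only [this] at hab
          obtain ⟨rfl, rfl⟩ := hu a' ha' b' hb' hab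
          simp at hb1
          exact absurd hb1 hxB'
      have := iht B1.card (by omega) A1 B1 (by omega) le_rfl
        (Finset.mem_union_left _ hA)
        (Finset.mem_inter.2 ⟨hB, Finset.mem_image.2 ⟨x, hxB, by simp⟩⟩) u1
      have := Finset.card_le_card m1
      omega
    · have u2 : ∀ a ∈ A2, ∀ b ∈ B2, a * b = 1 → a = 1 ∧ b = 1 := by
        intro a ha b hb hab
        obtain ⟨ha1, ha2⟩ := Finset.mem_inter.1 ha
        rcases Finset.mem_union.1 hb with hb | hb
        · exact hu a ha1 b hb hab
        · obtain ⟨a', ha', rfl⟩ := Finset.mem_image.1 ha2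
          obtain ⟨b', hb', rfl⟩ := Finset.mem_image.1 hb
          have : a' * x⁻¹ * (x * b') = a' * b' := by group
          simp only [this] at hab
          obtain ⟨rfl, rfl⟩ := hu a' ha' b' hb' hab
          simp at ha1
          exact absurd ha1 hxA'
      have h5 := hAc A2
      have h6 := hAc B2
      have := ihs (2 * Fintype.card G - (A2.card + B2.card)) (by omega) B2.card A2 B2 le_rfl le_rfl
        (Finset.mem_inter.2 ⟨hA, Finset.mem_image.2 ⟨x, hxA, by simp⟩⟩)
        (Finset.mem_union_left _ hB) u2
      have := Finset.card_le_card m2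
      omega
  · push Not at hx
    have h1 : A ∩ B ⊆ {1} := fun x h => by simpa using hx x h
    have h2 := Finset.card_le_card h1
    have h3 := Finset.card_union_add_card_inter A B
    have h4 : A ∪ B ⊆ A * B := by
      intro y hy
      rcases Finset.mem_union.1 hy with h | h
      · simpa using Finset.mul_mem_mul h hB
      · simpa using Finset.mul_mem_mul hA h
    have := Finset.card_le_card h4
    simp at h2
    omega

theorem kemperman {G : Type*} [Group G] [DecidableEq G] [Fintype G] (A B : Finset G) (a0 b0 : G)
    (ha : a0 ∈ A) (hb : b0 ∈ B)
    (hu : ∀ a ∈ A, ∀ b ∈ B, a * b = a0 * b0 → a = a0 ∧ b = b0) :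
    A.card + B.card ≤ (A * B).card + 1 := by
  have i1 : Function.Injective (fun y : G => a0⁻¹ * y) := mul_right_injective _
  have i2 : Function.Injective (fun y : G => y * b0⁻¹) := mul_left_injective _
  have := kemp_core _ _ (A.image (fun y => a0⁻¹ * y)) (B.image (fun y => y * b0⁻¹)) le_rfl le_rfl
    (Finset.mem_image.2 ⟨a0, ha, by simp⟩) (Finset.mem_image.2 ⟨b0, hb, by simp⟩) (by
      intro a h1 b h2 hab
      obtain ⟨a, k1, rfl⟩ := Finset.mem_image.1 h1
      obtain ⟨b, k2, rfl⟩ := Finset.mem_image.1 h2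
      have : a * b = a0 * b0 := by
        have h3 : a0 * (a0⁻¹ * a * (b * b0⁻¹)) * b0 = a0 * 1 * b0 := by simp only [hab]
        simpa [mul_assoc] using h3
      obtain ⟨rfl, rfl⟩ := hu a k1 b k2 this
      simp)
  rw [Finset.card_image_of_injective _ i1, Finset.card_image_of_injective _ i2] at this
  refine this.trans ?_
  have : (A.image (fun y => a0⁻¹ * y) * B.image (fun y => y * b0⁻¹)) ⊆
      (A * B).image (fun y => a0⁻¹ * y * b0⁻¹) := by
    intro y hy
    obtain ⟨a, h1, b, h2, rfl⟩ := Finset.mem_mul.1 hy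
    obtain ⟨a, k1, rfl⟩ := Finset.mem_image.1 h1
    obtain ⟨b, k2, rfl⟩ := Finset.mem_image.1 h2
    exact Finset.mem_image.2 ⟨a * b, Finset.mul_mem_mul k1 k2, by simp [mul_assoc]⟩
  have := (Finset.card_le_card this).trans Finset.card_image_le
  omega


def Sel {G : Type*} [Group G] (g : ℕ → G) (w : ℕ → ℕ) (J : Finset ℕ) (t : ℕ) : Prop :=
  ∃ l : List ℕ, l.Nodup ∧ (∀ i ∈ l, i ∈ J) ∧ (l.map w).sum = t ∧ (l.map g).prod = 1

def wval {G : Type*} (g : ℕ → G) (g0 : G) : Option ℕ → G := fun o => o.elim g0 g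

theorem fill {G : Type*} (g : ℕ → G) (g0 : G) (w : ℕ → ℕ) :
    ∀ (l : List (Option ℕ)) (H : Finset ℕ), l.count none ≤ H.card →
      (∀ i ∈ H, g i = g0 ∧ w i = 1 ∧ some i ∉ l) → (l.filterMap id).Nodup →
      ∃ l' : List ℕ, l'.Nodup ∧ (∀ i ∈ l', some i ∈ l ∨ i ∈ H) ∧
        l'.map g = l.map (wval g g0) ∧ l'.map w = l.map (wval w 1) := by
  intro l
  induction l with
  | nil => intro H _ _ _; exact ⟨[], by simp⟩
  | cons o l ih =>
    intro H hc hH hn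
    cases o with
    | none =>
      simp only [List.count_cons_self] at hc
      obtain ⟨x, hx⟩ : H.Nonempty := by
        rw [← Finset.card_pos]; omega
      have hcard := Finset.card_erase_of_mem hx
      obtain ⟨l', h1, h2, h3, h4⟩ := ih (H.erase x) (by omega)
        (fun i hi => by
          have := hH i (Finset.mem_of_mem_erase hi)
          refine ⟨this.1, this.2.1, fun h => this.2.2 (by simp [h])⟩) (by simpa using hn)
      refine ⟨x :: l', ?_, ?_, ?_, ?_⟩
      · refine List.nodup_cons.2 ⟨fun h => ?_, h1⟩
        rcases h2 x h with h | h
        · exact (hH x hx).2.2 (by simp [h])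
        · simp at h
      · intro i hi
        rcases List.mem_cons.1 hi with rfl | hi
        · exact Or.inr hx
        · rcases h2 i hi with h | h
          · exact Or.inl (by simp [h])
          · exact Or.inr (Finset.mem_of_mem_erase h)
      · simp [h3, wval, (hH x hx).1]
      · simp [h4, wval, (hH x hx).2.1]
    | some j =>
      have hc' : l.count none ≤ H.card := by simpa using hc
      have hn' : j ∉ l.filterMap id ∧ (l.filterMap id).Nodup := by
        rw [← List.nodup_cons]; simpa using hn
      obtain ⟨l', h1, h2, h3, h4⟩ := ih H hc'
        (fun i hi => by
          have := hH i hi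
          refine ⟨this.1, this.2.1, fun h => this.2.2 (by simp [h])⟩) hn'.2
      refine ⟨j :: l', ?_, ?_, ?_, ?_⟩
      · refine List.nodup_cons.2 ⟨fun h => ?_, h1⟩
        rcases h2 j h with h | h
        · exact hn'.1 (by simpa using h)
        · exact (hH j h).2.2 (by simp)
      · intro i hi
        rcases List.mem_cons.1 hi with rfl | hi
        · exact Or.inl (by simp)
        · rcases h2 i hi with h | h
          · exact Or.inl (by simp [h])
          · exact Or.inr h
      · simp [h3, wval]
      · simp [h4, wval]

inductive WRel (A : ℕ → Finset ℕ) : ℕ → List (Option ℕ) → List (Option ℕ) → Prop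
  | nil (c : ℕ) : WRel A c [] []
  | keepSome (c i : ℕ) (l l' : List (Option ℕ)) : WRel A c l l' → WRel A c (some i :: l) (some i :: l')
  | keepNone (c : ℕ) (l l' : List (Option ℕ)) :
      WRel A (c + 1) l l' → WRel A c (none :: l) (none :: l')
  | repl (c i : ℕ) (l l' : List (Option ℕ)) : i ∈ A c →
      WRel A (c + 1) l l' → WRel A c (none :: l) (some i :: l')

theorem WRel.self (A : ℕ → Finset ℕ) : ∀ (l : List (Option ℕ)) (c : ℕ), WRel A c l l := by
  intro l
  induction l with
  | nil => intro c; exact WRel.nil c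
  | cons o l ih =>
    intro c
    cases o with
    | none => exact WRel.keepNone _ _ _ (ih _)
    | some i => exact WRel.keepSome _ _ _ _ (ih _)

theorem WRel.wt {A : ℕ → Finset ℕ} {w : ℕ → ℕ} (hw : ∀ c, ∀ i ∈ A c, w i = 1)
    {c : ℕ} {l l' : List (Option ℕ)} (h : WRel A c l l') :
    (l'.map (wval w 1)).sum = (l.map (wval w 1)).sum := by
  induction h with
  | nil => rfl
  | keepSome c i l l' h ih => simp [ih]
  | keepNone c l l' h ih => simp [ih]
  | repl c i l l' hi h ih => simp [ih, wval, hw c i hi]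

theorem WRel.count {A : ℕ → Finset ℕ}
    {c : ℕ} {l l' : List (Option ℕ)} (h : WRel A c l l') :
    l'.count none ≤ l.count none ∧ (l' ≠ l → l'.count none < l.count none) := by
  induction h with
  | nil => simp
  | keepSome c i l l' h ih => simpa using ih
  | keepNone c l l' h ih => simpa using ih
  | repl c i l l' hi h ih => simp; omega

theorem WRel.mem {A : ℕ → Finset ℕ}
    {c : ℕ} {l l' : List (Option ℕ)} (h : WRel A c l l') :
    ∀ i, some i ∈ l' → some i ∈ l ∨ ∃ c', c ≤ c' ∧ i ∈ A c' := by
  induction h with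
  | nil => simp
  | keepSome c j l l' h ih =>
    intro i hi
    rcases List.mem_cons.1 hi with h | h
    · left; simp [h]
    · rcases ih i h with h | h
      · left; simp [h]
      · exact Or.inr h
  | keepNone c l l' h ih =>
    intro i hi
    rcases List.mem_cons.1 hi with h | h
    · simp at h
    · rcases ih i h with h | ⟨c', h, h'⟩
      · left; simp [h]
      · exact Or.inr ⟨c', by omega, h'⟩
  | repl c j l l' hj h ih =>
    intro i hi
    rcases List.mem_cons.1 hi with h | h
    · right
      cases h
      exact ⟨c, le_rfl, hj⟩
    · rcases ih i h with h | ⟨c', h, h'⟩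
      · left; simp [h]
      · exact Or.inr ⟨c', by omega, h'⟩

theorem WRel.nodup {A : ℕ → Finset ℕ} (hd : ∀ c c' i, i ∈ A c → i ∈ A c' → c = c')
    {c : ℕ} {l l' : List (Option ℕ)} (h : WRel A c l l') :
    (∀ c, ∀ i ∈ A c, some i ∉ l) → (l.filterMap id).Nodup → (l'.filterMap id).Nodup := by
  induction h with
  | nil => simp
  | keepSome c j l l' h ih =>
    intro hA hn
    have hn' : j ∉ l.filterMap id ∧ (l.filterMap id).Nodup := by
      rw [← List.nodup_cons]; simpa using hn
    have : (j :: l'.filterMap id).Nodup := by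
      refine List.nodup_cons.2 ⟨fun hj => ?_, ih (fun c i hi h => hA c i hi (by simp [h])) hn'.2⟩
      rcases h.mem j (by simpa using hj) with h | ⟨c', _, h'⟩
      · exact hn'.1 (by simpa using h)
      · exact hA c' j h' (by simp)
    simpa using this
  | keepNone c l l' h ih =>
    intro hA hn
    have := ih (fun c i hi h => hA c i hi (by simp [h])) (by simpa using hn)
    simpa using this
  | repl c j l l' hj h ih =>
    intro hA hn
    have : (j :: l'.filterMap id).Nodup := by
      refine List.nodup_cons.2 ⟨fun hj' => ?_, ih (fun c i hi h => hA c i hi (by simp [h]))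
        (by simpa using hn)⟩
      rcases h.mem j (by simpa using hj') with h | ⟨c', h, h'⟩
      · exact hA c j hj (by simp [h])
      · have := hd c c' j hj h'
        omega
    simpa using this

theorem main_sub {G : Type*} [Group G] [DecidableEq G] [Fintype G] (g : ℕ → G) (g0 : G)
    (A : ℕ → Finset ℕ) (hinj : ∀ c, Set.InjOn g (A c)) (hne : ∀ c, ∀ i ∈ A c, g i ≠ g0) :
    ∀ (l : List (Option ℕ)) (c : ℕ),
      (∃ l', WRel A c l l' ∧ l' ≠ l ∧ (l'.map (wval g g0)).prod = (l.map (wval g g0)).prod) ∨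
      (∃ P : Finset G, (l.map (wval g g0)).prod ∈ P ∧
        (∀ x ∈ P, ∃ l', WRel A c l l' ∧ (l'.map (wval g g0)).prod = x) ∧
        1 + ∑ i ∈ Finset.range (l.count none), (A (c + i)).card ≤ P.card) := by
  intro l
  induction l with
  | nil =>
    intro c; right
    refine ⟨{1}, by simp, ?_, by simp⟩
    intro x hx
    exact ⟨[], WRel.nil c, by rw [Finset.mem_singleton] at hx; simp [hx]⟩
  | cons o l ih =>
    intro c
    cases o with
    | some i =>
      rcases ih c with ⟨l', h1, h2, h3⟩ | ⟨P, h1, h2, h3⟩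
      · left
        exact ⟨some i :: l', WRel.keepSome _ _ _ _ h1, by simpa using h2, by simp [h3]⟩
      · right
        refine ⟨P.image (fun x => g i * x), ?_, ?_, ?_⟩
        · simp only [List.map_cons, List.prod_cons]
          exact Finset.mem_image.2 ⟨_, h1, rfl⟩
        · intro x hx
          obtain ⟨y, hy, rfl⟩ := Finset.mem_image.1 hx
          obtain ⟨l', h4, h5⟩ := h2 y hy
          exact ⟨some i :: l', WRel.keepSome _ _ _ _ h4, by simp [h5, wval]⟩
        · rw [Finset.card_image_of_injective _ (mul_right_injective (g i))]
          simpa using h3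
    | none =>
      rcases ih (c + 1) with ⟨l', h1, h2, h3⟩ | ⟨P, h1, h2, h3⟩
      · left
        exact ⟨none :: l', WRel.keepNone _ _ _ h1, by simpa using h2, by simp [h3]⟩
      · set D : Finset G := insert g0 ((A c).image g) with hD
        have hDc : D.card = (A c).card + 1 := by
          rw [hD, Finset.card_insert_of_notMem, Finset.card_image_of_injOn (hinj c)]
          intro h
          obtain ⟨i, hi, h⟩ := Finset.mem_image.1 h
          exact hne c i hi h
        by_cases hu : ∀ a ∈ D, ∀ b ∈ P, a * b = g0 * (l.map (wval g g0)).prod →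
            a = g0 ∧ b = (l.map (wval g g0)).prod
        · right
          have hk := kemperman D P g0 _ (Finset.mem_insert_self _ _) h1 hu
          refine ⟨D * P, ?_, ?_, ?_⟩
          · simp only [List.map_cons, List.prod_cons]
            exact Finset.mul_mem_mul (Finset.mem_insert_self _ _) h1
          · intro x hx
            obtain ⟨a, ha, b, hb, rfl⟩ := Finset.mem_mul.1 hx
            obtain ⟨l', h4, h5⟩ := h2 b hb
            rcases Finset.mem_insert.1 ha with rfl | ha
            · exact ⟨none :: l', WRel.keepNone _ _ _ h4, by simp [h5, wval]⟩
            · obtain ⟨i, hi, rfl⟩ := Finset.mem_image.1 ha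
              exact ⟨some i :: l', WRel.repl _ _ _ _ hi h4, by simp [h5, wval]⟩
          · rw [List.count_cons_self, Finset.sum_range_succ']
            have e : ∑ k ∈ Finset.range (l.count none), (A (c + (k + 1))).card =
                ∑ k ∈ Finset.range (l.count none), (A (c + 1 + k)).card := by
              apply Finset.sum_congr rfl; intro k _; congr 2; omega
            rw [e]
            simp only [add_zero]
            omega
        · left
          push Not at hu
          obtain ⟨a, ha, b, hb, hab, hne'⟩ := hu
          obtain ⟨l', h4, h5⟩ := h2 b hb
          rcases Finset.mem_insert.1 ha with rfl | ha
          · exact absurd (mul_left_cancel hab) (hne' rfl)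
          · obtain ⟨i, hi, rfl⟩ := Finset.mem_image.1 ha
            exact ⟨some i :: l', WRel.repl _ _ _ _ hi h4, by simp, by simp [h5, wval, hab]⟩

theorem coloring {G : Type*} [DecidableEq G] (g : ℕ → G) (U : Finset ℕ) (r : ℕ)
    (hr : ∀ x, (U.filter (fun i => g i = x)).card ≤ r) :
    ∃ A : ℕ → Finset ℕ, (∀ c, A c ⊆ U) ∧ (∀ c c' i, i ∈ A c → i ∈ A c' → c = c') ∧
      (∀ c, Set.InjOn g (A c)) ∧ ∑ c ∈ Finset.range r, (A c).card = U.card := by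
  let col : ℕ → ℕ := fun i => (U.filter (fun j => g j = g i ∧ j < i)).card
  have hlt : ∀ i ∈ U, ∀ j ∈ U, g i = g j → i < j → col i < col j := by
    intro i hi j hj hg hij
    apply Finset.card_lt_card
    rw [Finset.ssubset_iff_of_subset]
    · exact ⟨i, by simp [hi, hg, hij], by simp⟩
    · intro k hk
      simp only [Finset.mem_filter] at hk ⊢
      exact ⟨hk.1, hk.2.1.trans hg, by omega⟩
  refine ⟨fun c => U.filter (fun i => col i = c), fun c => Finset.filter_subset _ _, ?_, ?_, ?_⟩
  · intro c c' i h1 h2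
    simp only [Finset.mem_filter] at h1 h2
    exact h1.2.symm.trans h2.2
  · intro c i hi j hj hg
    simp only [Finset.coe_filter, Set.mem_ofPred_eq] at hi hj
    rcases lt_trichotomy i j with h | h | h
    · have := hlt i hi.1 j hj.1 hg h; omega
    · exact h
    · have := hlt j hj.1 i hi.1 hg.symm h; omega
  · rw [Finset.card_eq_sum_card_fiberwise (f := col) (t := Finset.range r)]
    intro i hi
    simp only [Finset.coe_range, Set.mem_Iio]
    refine lt_of_lt_of_le ?_ (hr (g i))
    apply Finset.card_lt_card
    rw [Finset.ssubset_iff_of_subset]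
    · exact ⟨i, by simpa using hi, by simp⟩
    · intro k hk
      simp only [Finset.mem_filter] at hk ⊢
      exact ⟨hk.1, hk.2.1⟩


structure WordOK {G : Type*} [Group G] (g : ℕ → G) (w : ℕ → ℕ) (g0 : G) (Z : Finset ℕ) (t : ℕ)
    (l : List (Option ℕ)) : Prop where
  nodup : (l.filterMap id).Nodup
  mem : ∀ i, some i ∈ l → i ∈ Z
  sum : (l.map (wval w 1)).sum = t
  prod : (l.map (wval g g0)).prod = 1

theorem nstep {G : Type*} [Group G] [DecidableEq G] [Fintype G] (g : ℕ → G) (w : ℕ → ℕ) (g0 : G)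
    (Z : Finset ℕ) (t : ℕ) (l : List (Option ℕ)) (h : WordOK g w g0 Z t l) (U : Finset ℕ)
    (hUZ : U ⊆ Z) (hUl : ∀ i ∈ U, some i ∉ l) (hUw : ∀ i ∈ U, w i = 1) (hUg : ∀ i ∈ U, g i ≠ g0)
    (r : ℕ) (hr : ∀ x, (U.filter (fun i => g i = x)).card ≤ r) (hrl : r ≤ l.count none)
    (hU : Fintype.card G ≤ U.card) :
    ∃ l', WordOK g w g0 Z t l' ∧ l'.count none < l.count none := by
  obtain ⟨A, a1, a2, a3, a4⟩ := coloring g U r hr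
  rcases main_sub g g0 A a3 (fun c i hi => hUg i (a1 c hi)) l 0 with ⟨l', h1, h2, h3⟩ | ⟨P, _, _, h3⟩
  · refine ⟨l', ⟨?_, ?_, ?_, ?_⟩, h1.count.2 h2⟩
    · exact h1.nodup a2 (fun c i hi => hUl i (a1 c hi)) h.nodup
    · intro i hi
      rcases h1.mem i hi with hi | ⟨c, _, hi⟩
      · exact h.mem i hi
      · exact hUZ (a1 c hi)
    · rw [h1.wt (fun c i hi => hUw i (a1 c hi)), h.sum]
    · rw [h3, h.prod]
  · exfalso
    have h5 : ∑ i ∈ Finset.range r, (A i).card ≤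
        ∑ i ∈ Finset.range (l.count none), (A (0 + i)).card := by
      simp only [zero_add]
      apply Finset.sum_le_sum_of_subset
      simpa using hrl
    have := Finset.card_le_univ P
    omega

theorem bstep {G : Type*} [Group G] [DecidableEq G] [Fintype G] (g : ℕ → G) (w : ℕ → ℕ) (g0 : G)
    (Z : Finset ℕ) (t : ℕ) (y : Option ℕ) (l : List (Option ℕ))
    (h : WordOK g w g0 Z t (none :: y :: l)) (U : Finset ℕ)
    (hUZ : U ⊆ Z) (hUl : ∀ i ∈ U, some i ∉ y :: l) (hUw : ∀ i ∈ U, w i = 1)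
    (hUg : ∀ i ∈ U, g i ≠ g0)
    (r : ℕ) (hr : ∀ x, (U.filter (fun i => g i = x)).card ≤ r) (hrl : r ≤ l.count none)
    (hU : Fintype.card G ≤ U.card + 1) (j : ℕ) (hj : j ∈ Z) (hjl : some j ∉ l) (hjU : j ∉ U)
    (hwj : w j = 2) (hwy : wval w 1 y = 1) :
    ∃ l', WordOK g w g0 Z t l' ∧ l'.count none < (none :: y :: l).count none := by
  obtain ⟨A, a1, a2, a3, a4⟩ := coloring g U r hr
  have hl : ((y :: l).filterMap id).Nodup := by simpa using h.nodup
  have hl0 : (l.filterMap id).Nodup := by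
    cases y with
    | none => simpa using hl
    | some k =>
      have : (k :: l.filterMap id).Nodup := by simpa using hl
      exact (List.nodup_cons.1 this).2
  have hsum : 1 + (1 + (l.map (wval w 1)).sum) = t := by
    have := h.sum
    simpa [hwy, show wval w 1 none = 1 from rfl] using this
  have hprod : g0 * (wval g g0 y * (l.map (wval g g0)).prod) = 1 := by
    simpa [show wval g g0 none = g0 from rfl] using h.prod
  -- replacing the head
  have key : ∀ l', WRel A 0 l l' → g j * (l'.map (wval g g0)).prod = 1 →
      ∃ l', WordOK g w g0 Z t l' ∧ l'.count none < (none :: y :: l).count none := by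
    intro l' h1 hp
    refine ⟨some j :: l', ⟨?_, ?_, ?_, ?_⟩, ?_⟩
    · have : (j :: l'.filterMap id).Nodup := by
        refine List.nodup_cons.2 ⟨fun hm => ?_, ?_⟩
        · rcases h1.mem j (by simpa using hm) with hi | ⟨c, _, hi⟩
          · exact hjl hi
          · exact hjU (a1 c hi)
        · exact h1.nodup a2 (fun c i hi hh => hUl i (a1 c hi) (by simp [hh])) hl0
      simpa using this
    · intro i hi
      rcases List.mem_cons.1 hi with hi | hi
      · cases hi; exact hj
      · rcases h1.mem i hi with hi | ⟨c, _, hi⟩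
        · exact h.mem i (by simp [hi])
        · exact hUZ (a1 c hi)
    · simp only [List.map_cons, List.sum_cons]
      rw [h1.wt (fun c i hi => hUw i (a1 c hi))]
      have : wval w 1 (some j) = 2 := hwj
      omega
    · simpa [wval] using hp
    · have := h1.count.1
      have h6 : l.count none ≤ (y :: l).count none := List.count_le_count_cons
      simp
      omega
  rcases main_sub g g0 A a3 (fun c i hi => hUg i (a1 c hi)) l 0 with
    ⟨l', h1, h2, h3⟩ | ⟨P, p1, p2, p3⟩
  · refine ⟨none :: y :: l', ⟨?_, ?_, ?_, ?_⟩, ?_⟩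
    · cases y with
      | none =>
        have := h1.nodup a2 (fun c i hi hh => hUl i (a1 c hi) (by simp [hh])) hl0
        simpa using this
      | some k =>
        have := (WRel.keepSome 0 k l l' h1).nodup a2 (fun c i hi => hUl i (a1 c hi)) hl
        simpa using this
    · intro i hi
      rcases List.mem_cons.1 hi with hi | hi
      · cases hi
      · rcases List.mem_cons.1 hi with hi | hi
        · exact h.mem i (by simp [hi])
        · rcases h1.mem i hi with hi | ⟨c, _, hi⟩
          · exact h.mem i (by simp [hi])
          · exact hUZ (a1 c hi)
    · simp only [List.map_cons, List.sum_cons]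
      rw [h1.wt (fun c i hi => hUw i (a1 c hi)), hwy]
      exact hsum
    · simp only [List.map_cons, List.prod_cons, h3]
      exact hprod
    · have := h1.count.2 h2
      simp only [List.count_cons]
      omega
  · have h5 : ∑ i ∈ Finset.range r, (A i).card ≤
        ∑ i ∈ Finset.range (l.count none), (A (0 + i)).card := by
      simp only [zero_add]
      apply Finset.sum_le_sum_of_subset
      simpa using hrl
    by_cases hb : g0 * wval g g0 y = g j
    · exact key l (WRel.self A l 0) (by rw [← hb, mul_assoc]; exact hprod)
    · by_cases hu : ∀ a ∈ ({g0 * wval g g0 y, g j} : Finset G), ∀ b ∈ P,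
          a * b = (g0 * wval g g0 y) * (l.map (wval g g0)).prod →
            a = g0 * wval g g0 y ∧ b = (l.map (wval g g0)).prod
      · exfalso
        have hk := kemperman _ P _ _ (by simp) p1 hu
        rw [Finset.card_pair hb] at hk
        have := Finset.card_le_univ (({g0 * wval g g0 y, g j} : Finset G) * P)
        omega
      · push Not at hu
        obtain ⟨a, ha, b, hb', hab, hne⟩ := hu
        rcases Finset.mem_insert.1 ha with rfl | ha
        · exact absurd (mul_left_cancel hab) (hne rfl)
        · rw [Finset.mem_singleton] at ha
          obtain ⟨l', h6, h7⟩ := p2 b hb'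
          refine key l' h6 ?_
          rw [h7, ← ha, hab, mul_assoc]
          exact hprod

theorem word_rotate {G : Type*} [Group G] {g : ℕ → G} {w : ℕ → ℕ} {g0 : G} {Z : Finset ℕ} {t : ℕ}
    (l1 l2 : List (Option ℕ)) (h : WordOK g w g0 Z t (l1 ++ l2)) : WordOK g w g0 Z t (l2 ++ l1) := by
  obtain ⟨h1, h2, h3, h4⟩ := h
  refine ⟨?_, ?_, ?_, ?_⟩
  · rw [List.filterMap_append] at h1 ⊢
    exact List.nodup_append_comm.1 h1
  · intro i hi
    apply h2 i
    simp only [List.mem_append] at hi ⊢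
    exact hi.symm
  · simp only [List.map_append, List.sum_append] at h3 ⊢
    omega
  · simp only [List.map_append, List.prod_append] at h4 ⊢
    exact mul_eq_one_comm.1 h4

/-- a list starting with `none` containing some `some` can be rotated. -/
theorem word_adj (l : List (Option ℕ)) (i : ℕ) (hi : some i ∈ l) :
    ∃ (s k : ℕ) (r : List (Option ℕ)), l = List.replicate s none ++ some k :: r := by
  induction l with
  | nil => simp at hi
  | cons o l ih =>
    cases o with
    | some k => exact ⟨0, k, l, by simp⟩
    | none =>
      obtain ⟨s, k, r, h⟩ := ih (by simpa using hi)
      exact ⟨s + 1, k, r, by rw [h, List.replicate_succ]; rfl⟩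

theorem word_adj_rotate {G : Type*} [Group G] {g : ℕ → G} {w : ℕ → ℕ} {g0 : G} {Z : Finset ℕ}
    {t : ℕ} (l : List (Option ℕ)) (h : WordOK g w g0 Z t l) (hn : none ∈ l) (i : ℕ)
    (hi : some i ∈ l) : ∃ (k : ℕ) (r : List (Option ℕ)),
      WordOK g w g0 Z t (none :: some k :: r) ∧ (none :: some k :: r).Perm l := by
  obtain ⟨l1, l2, rfl⟩ := List.append_of_mem hn
  have h1 := word_rotate _ _ h
  have p1 : ((none :: l2) ++ l1).Perm (l1 ++ none :: l2) := List.perm_append_comm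
  have hi' : some i ∈ l2 ++ l1 := by
    have := p1.mem_iff.2 hi
    simpa using this
  obtain ⟨s, k, r, hr⟩ := word_adj _ i hi'
  have e : (none :: l2) ++ l1 = List.replicate s none ++ ([none] ++ some k :: r) := by
    rw [List.cons_append, hr, ← List.append_assoc, ← List.replicate_succ', List.replicate_succ]
    rfl
  rw [e] at h1 p1
  refine ⟨k, r ++ List.replicate s none, by simpa using word_rotate _ _ h1, ?_⟩
  refine List.Perm.trans ?_ p1
  have p2 := List.perm_append_comm (l₁ := [none] ++ some k :: r) (l₂ := List.replicate s none)
  rw [List.append_assoc] at p2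
  exact p2


theorem word_split (w : ℕ → ℕ) (l : List (Option ℕ)) :
    (l.map (wval w 1)).sum = l.count none + ((l.filterMap id).map w).sum := by
  induction l with
  | nil => simp
  | cons o l ih =>
    cases o with
    | none => simp [ih, wval]; ring
    | some i => simp [ih, wval]; ring

theorem word_used {G : Type*} [Group G] {g : ℕ → G} {w : ℕ → ℕ} {g0 : G} {Z : Finset ℕ}
    {t : ℕ} {l : List (Option ℕ)} (h : WordOK g w g0 Z t l) (S : Finset ℕ)
    (hS : ∀ i ∈ S, some i ∈ l) : ∑ i ∈ S, w i + l.count none ≤ t := by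
  have h1 := h.sum
  rw [word_split] at h1
  rw [← List.sum_toFinset w h.nodup] at h1
  have : S ⊆ (l.filterMap id).toFinset := by
    intro i hi
    simpa using hS i hi
  have h2 : ∑ i ∈ S, w i ≤ ∑ i ∈ (l.filterMap id).toFinset, w i :=
    Finset.sum_le_sum_of_subset this
  have h3 : l.count none + ∑ i ∈ (l.filterMap id).toFinset, w i = t := h1
  omega

theorem word_sel {G : Type*} [Group G] {g : ℕ → G} {w : ℕ → ℕ} {g0 : G} {Z : Finset ℕ}
    {t : ℕ} {l : List (Option ℕ)} (h : WordOK g w g0 Z t l) (H J : Finset ℕ)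
    (hH : ∀ i ∈ H, g i = g0 ∧ w i = 1 ∧ i ∉ Z) (hc : l.count none ≤ H.card)
    (hZ : Z ⊆ J) (hHJ : H ⊆ J) : Sel g w J t := by
  obtain ⟨l', h1, h2, h3, h4⟩ := fill g g0 w l H hc
    (fun i hi => ⟨(hH i hi).1, (hH i hi).2.1, fun hm => (hH i hi).2.2 (h.mem i hm)⟩) h.nodup
  refine ⟨l', h1, fun i hi => ?_, by rw [h4, h.sum], by rw [h3, h.prod]⟩
  rcases h2 i hi with hi | hi
  · exact hZ (h.mem i hi)
  · exact hHJ hi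

theorem word_start {G : Type*} [Group G] [Fintype G] (g : ℕ → G) (w : ℕ → ℕ) (g0 : G) (Z : Finset ℕ)
    (k : ℕ) : WordOK g w g0 Z (k * Fintype.card G) (List.replicate (k * Fintype.card G) none) := by
  refine ⟨?_, ?_, ?_, ?_⟩
  · have : (List.replicate (k * Fintype.card G) (none : Option ℕ)).filterMap id = [] := by
      rw [List.filterMap_eq_nil_iff]
      intro a ha
      exact (List.mem_replicate.1 ha).2
    rw [this]; simp
  · intro i hi
    have := (List.mem_replicate.1 hi).2
    simp at this
  · simp [wval]
  · simp [wval, mul_comm k, pow_mul]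

theorem base_core {G : Type*} [Group G] [DecidableEq G] [Fintype G] (g : ℕ → G) (w : ℕ → ℕ)
    (k : ℕ) (hk : 1 ≤ k) (J J1 : Finset ℕ) (hJ1 : J1 ⊆ J) (hw : ∀ i ∈ J1, w i = 1)
    (hc : k * Fintype.card G + Fintype.card G ≤ J.card + 1)
    (hJ : J1 = J ∨ 2 ≤ k ∧ ∃ j0 ∈ J, j0 ∉ J1 ∧ w j0 = 2 ∧ J = insert j0 J1) :
    Sel g w J (k * Fintype.card G) := by
  have hn : 0 < Fintype.card G := Fintype.card_pos
  obtain ⟨g0, -, hg0⟩ := Finset.exists_max_image (Finset.univ : Finset G)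
    (fun x => (J1.filter (fun i => g i = x)).card) ⟨1, Finset.mem_univ _⟩
  set h := (J1.filter (fun i => g i = g0)).card with hh
  set H0 := J1.filter (fun i => g i = g0) with hH0
  set T := J1.filter (fun i => g i ≠ g0) with hT
  have hTc : T.card + h = J1.card := by
    rw [hh, hT, hH0, add_comm]
    exact Finset.card_filter_add_card_filter_not _
  set n := Fintype.card G with hn'
  have hTZ : T ⊆ J \ H0 := by
    intro i hi
    simp only [hT, hH0, Finset.mem_filter, Finset.mem_sdiff] at hi ⊢
    exact ⟨hJ1 hi.1, fun hh => hi.2 hh.2⟩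
  have hTw : ∀ i ∈ T, w i = 1 := fun i hi => hw i (Finset.mem_filter.1 hi).1
  have hTg : ∀ i ∈ T, g i ≠ g0 := fun i hi => (Finset.mem_filter.1 hi).2
  have main : ∀ v : ℕ, ∀ l, WordOK g w g0 (J \ H0) (k * n) l → l.count none = v →
      Sel g w J (k * n) := by
    intro v
    induction v using Nat.strong_induction_on with
    | _ v ih =>
    intro l hl hv
    by_cases hvh : v ≤ h
    · refine word_sel hl H0 J ?_ (by omega) Finset.sdiff_subset
        ((Finset.filter_subset _ _).trans hJ1)
      intro i hi
      refine ⟨(Finset.mem_filter.1 hi).2, hw i (Finset.mem_filter.1 hi).1, by simp [hi]⟩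
    push Not at hvh
    set U := T.filter (fun i => some i ∉ l) with hU
    set Us := T.filter (fun i => some i ∈ l) with hUs
    have hUU : Us.card + U.card = T.card := Finset.card_filter_add_card_filter_not _
    have hUT : U ⊆ T := Finset.filter_subset _ _
    have hmult : ∀ V ⊆ T, ∀ x, (V.filter (fun i => g i = x)).card ≤ h := by
      intro V hV x
      refine le_trans (Finset.card_le_card ?_) (hg0 x (Finset.mem_univ _))
      exact Finset.filter_subset_filter _ (hV.trans (Finset.filter_subset _ _))
    have hsumUs : ∑ i ∈ Us, w i = Us.card := by
      rw [Finset.sum_congr rfl (fun i hi => hTw i (Finset.mem_filter.1 hi).1)]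
      simp [hUs]
    have hused := word_used hl Us (fun i hi => (Finset.mem_filter.1 hi).2)
    rw [hsumUs] at hused
    have step : n ≤ U.card → Sel g w J (k * n) := by
      intro hUn
      obtain ⟨l', h1, h2⟩ := nstep g w g0 (J \ H0) (k * n) l hl U (hUT.trans hTZ)
        (fun i hi => (Finset.mem_filter.1 hi).2) (fun i hi => hTw i (hUT hi))
        (fun i hi => hTg i (hUT hi)) h (hmult U hUT) (by omega) hUn
      exact ih _ (by omega) l' h1 rfl
    rcases hJ with rfl | ⟨hk2, j0, hj0, hj01, hwj, hJe⟩
    · exact step (by omega)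
    have hJc : J.card = J1.card + 1 := by rw [hJe, Finset.card_insert_of_notMem hj01]
    have hj0T : j0 ∉ T := fun hh => hj01 (Finset.mem_filter.1 hh).1
    by_cases hjl : some j0 ∈ l
    · have hu2 := word_used hl (insert j0 Us) (by
        intro i hi
        rcases Finset.mem_insert.1 hi with rfl | hi
        · exact hjl
        · exact (Finset.mem_filter.1 hi).2)
      rw [Finset.sum_insert (fun hh => hj0T (Finset.mem_filter.1 hh).1), hsumUs, hwj] at hu2
      exact step (by omega)
    by_cases hv2 : h + 2 ≤ v
    · exact step (by omega)
    have hj0Z : j0 ∈ J \ H0 := by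
      simp only [Finset.mem_sdiff, hj0, true_and]
      exact fun hh => hj01 (Finset.mem_filter.1 hh).1
    by_cases hs : ∃ i, some i ∈ l
    · obtain ⟨i, hi⟩ := hs
      obtain ⟨y, r, hr1, hr2⟩ := word_adj_rotate l hl
        (List.count_pos_iff.1 (by omega)) i hi
      have hc1 : (none :: some y :: r).count none = l.count none := hr2.count_eq _
      have hc2 : r.count none + 1 = l.count none := by rw [← hc1]; simp
      have hyl : some y ∈ l := hr2.mem_iff.1 (by simp)
      have hyw : w y = 1 := by
        have hyJ := (Finset.mem_sdiff.1 (hl.mem y hyl)).1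
        rw [hJe] at hyJ
        rcases Finset.mem_insert.1 hyJ with rfl | hyJ
        · exact absurd hyl hjl
        · exact hw y hyJ
      obtain ⟨l', h1, h2⟩ := bstep g w g0 (J \ H0) (k * n) (some y) r hr1 U (hUT.trans hTZ)
        (fun i hi hm => (Finset.mem_filter.1 hi).2 (hr2.mem_iff.1 (by simp at hm ⊢; exact hm)))
        (fun i hi => hTw i (hUT hi))
        (fun i hi => hTg i (hUT hi)) h (hmult U hUT) (by omega) (by omega) j0 hj0Z
        (fun hm => hjl (hr2.mem_iff.1 (by simp [hm]))) (fun hh => hj0T (hUT hh)) hwj hyw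
      exact ih _ (by omega) l' h1 rfl
    · push Not at hs
      have hlr : l = List.replicate l.length none := by
        rw [List.eq_replicate_iff]
        refine ⟨rfl, fun b hb => ?_⟩
        cases b with
        | none => rfl
        | some i => exact absurd hb (hs i)
      have hlen : l.length = v := by
        rw [← hv]; conv_rhs => rw [hlr]
        simp
      have hkn : k * n = v := by
        have := hl.sum
        rw [hlr] at this
        simp [wval] at this
        omega
      have hkn2 : 2 * n ≤ k * n := Nat.mul_le_mul_right _ hk2
      obtain ⟨v', rfl⟩ : ∃ v', v = v' + 2 := ⟨v - 2, by omega⟩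
      rw [hlen, List.replicate_succ, List.replicate_succ] at hlr
      obtain ⟨V, hV1, hV2⟩ := Finset.exists_subset_card_eq (s := T) (n := n - 1) (by omega)
      rw [hlr] at hl
      obtain ⟨l', h1, h2⟩ := bstep g w g0 (J \ H0) (k * n) none _ hl V (hV1.trans hTZ)
        (by
          intro i hi hm
          simp [List.mem_replicate] at hm)
        (fun i hi => hTw i (hV1 hi))
        (fun i hi => hTg i (hV1 hi)) (n - 1)
        (fun x => (Finset.card_filter_le _ _).trans hV2.le)
        (by simp; omega) (by omega) j0 hj0Z
        (by simp [List.mem_replicate]) (fun hh => hj0T (hV1 hh)) hwj rfl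
      refine ih _ ?_ l' h1 rfl
      rw [← hlr] at h2
      omega
  exact main _ _ (word_start g w g0 _ k) rfl

/-- admissible weights -/
def WAdm (w : ℕ → ℕ) (k : ℕ) (J : Finset ℕ) : Prop :=
  (∀ i ∈ J, w i = 1) ∨ 2 ≤ k ∧ ∃ j0 ∈ J, w j0 = 2 ∧ ∀ i ∈ J, i ≠ j0 → w i = 1

theorem base_grp {G : Type*} [Group G] [Fintype G] (g : ℕ → G) (w : ℕ → ℕ)
    (k : ℕ) (hk : 1 ≤ k) (J : Finset ℕ) (hw : WAdm w k J)
    (hc : k * Fintype.card G + Fintype.card G ≤ J.card + 1) :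
    Sel g w J (k * Fintype.card G) := by
  classical
  rcases hw with hw | ⟨hk2, j0, hj0, h2, hw⟩
  · exact base_core g w k hk J J subset_rfl hw hc (Or.inl rfl)
  · refine base_core g w k hk J (J.erase j0) (Finset.erase_subset _ _) ?_ hc (Or.inr ⟨hk2, j0, hj0, ?_, h2, ?_⟩)
    · intro i hi
      exact hw i (Finset.mem_of_mem_erase hi) (Finset.ne_of_mem_erase hi)
    · simp
    · rw [Finset.insert_erase hj0]

/-- property PS -/
def PS {G : Type*} [Group G] (K : Set G) (N0 A : ℕ) : Prop :=
  ∀ (k : ℕ) (g : ℕ → G) (w : ℕ → ℕ) (J : Finset ℕ), 1 ≤ k → (∀ i ∈ J, g i ∈ K) → WAdm w k J →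
    k * N0 + A ≤ J.card → Sel g w J (k * N0)

theorem base_sub {G : Type*} [Group G] [Fintype G] (K : Subgroup G) (K' : Set G) (hK : K' ⊆ K) :
    PS K' (Nat.card K) (Nat.card K - 1) := by
  classical
  intro k g w J hk hg hw hc
  have hpos : 0 < Nat.card K := Nat.card_pos
  rw [Nat.card_eq_fintype_card] at *
  obtain ⟨l, h1, h2, h3, h4⟩ := base_grp (G := K)
    (fun i => if h : g i ∈ K then ⟨g i, h⟩ else 1) w k hk J hw (by omega)
  refine ⟨l, h1, h2, h3, ?_⟩
  have := congrArg (K.subtype) h4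
  rw [map_list_prod, List.map_map] at this
  rw [← this.trans (map_one _)]
  congr 1
  apply List.map_congr_left
  intro i hi
  simp [show g i ∈ K from hK (hg i (h2 i hi))]


section Kemnitz
set_option linter.unusedSectionVars false
variable {p : ℕ} [Fact p.Prime]

def Dg (p : ℕ) (J : Finset ℕ) (d : ℕ) (F : Finset ℕ → ZMod p) : Prop :=
  ∀ K ⊆ J, d + K.card < J.card →
    ∑ I ∈ J.powerset, (if K ⊆ I then (-1) ^ I.card * F I else 0) = 0

theorem Dg.one (J : Finset ℕ) : Dg p J 0 (fun _ => 1) := by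
  intro K hK hc
  obtain ⟨j, hj, hjK⟩ := Finset.exists_mem_notMem_of_card_lt_card (s := K) (t := J) (by omega)
  obtain ⟨J', hjJ', rfl⟩ : ∃ J', j ∉ J' ∧ insert j J' = J :=
    ⟨J.erase j, by simp, Finset.insert_erase hj⟩
  rw [Finset.sum_powerset_insert hjJ', ← Finset.sum_add_distrib]
  apply Finset.sum_eq_zero
  intro I hI
  have hjI : j ∉ I := fun h => hjJ' (Finset.mem_powerset.1 hI h)
  simp only [Finset.subset_insert_iff_of_notMem hjK, Finset.card_insert_of_notMem hjI, pow_succ]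
  split_ifs <;> ring

theorem Dg.mono {J : Finset ℕ} {d d' : ℕ} {F : Finset ℕ → ZMod p} (h : Dg p J d F) (hd : d ≤ d') :
    Dg p J d' F := fun K hK hc => h K hK (by omega)

theorem Dg.sub {J : Finset ℕ} {d : ℕ} {F F' : Finset ℕ → ZMod p} (h : Dg p J d F)
    (h' : Dg p J d F') : Dg p J d (fun I => F I - F' I) := by
  intro K hK hc
  have := congrArg₂ (· - ·) (h K hK hc) (h' K hK hc)
  simp only [← Finset.sum_sub_distrib, sub_zero] at this
  refine Eq.trans ?_ this
  apply Finset.sum_congr rfl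
  intro I _
  split_ifs <;> ring

theorem Dg.sum {J : Finset ℕ} {d : ℕ} {ι : Type*} (s : Finset ι) {F : ι → Finset ℕ → ZMod p}
    (h : ∀ i ∈ s, Dg p J d (F i)) : Dg p J d (fun I => ∑ i ∈ s, F i I) := by
  intro K hK hc
  have : ∀ I, (if K ⊆ I then (-1) ^ I.card * ∑ i ∈ s, F i I else 0) =
      ∑ i ∈ s, (if K ⊆ I then (-1) ^ I.card * F i I else 0) := by
    intro I
    split_ifs
    · rw [Finset.mul_sum]
    · simp
  simp only [this]
  rw [Finset.sum_comm]
  exact Finset.sum_eq_zero fun i hi => h i hi K hK hc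

theorem Dg.smul {J : Finset ℕ} {d : ℕ} {F : Finset ℕ → ZMod p} (h : Dg p J d F) (c : ZMod p) :
    Dg p J d (fun I => c * F I) := by
  intro K hK hc
  have := congrArg (c * ·) (h K hK hc)
  simp only [Finset.mul_sum, mul_zero] at this
  refine Eq.trans ?_ this
  apply Finset.sum_congr rfl
  intro I _
  split_ifs <;> ring

theorem Dg.mem {J : Finset ℕ} {d : ℕ} {F : Finset ℕ → ZMod p} (h : Dg p J d F) (L : Finset ℕ)
    (hL : L ⊆ J) : Dg p J (d + L.card) (fun I => if L ⊆ I then F I else 0) := by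
  intro K hK hc
  have h1 := Finset.card_union_le K L
  refine Eq.trans ?_ (h (K ∪ L) (Finset.union_subset hK hL) (by omega))
  apply Finset.sum_congr rfl
  intro I _
  simp only [Finset.union_subset_iff]
  split_ifs <;> simp_all

theorem Dg.congr {J : Finset ℕ} {d : ℕ} {F F' : Finset ℕ → ZMod p} (h : Dg p J d F)
    (hF : ∀ I ⊆ J, F I = F' I) : Dg p J d F' := by
  intro K hK hc
  refine Eq.trans ?_ (h K hK hc)
  apply Finset.sum_congr rfl
  intro I hI
  rw [hF I (Finset.mem_powerset.1 hI)]

theorem Dg.lin {J : Finset ℕ} {d : ℕ} {F : Finset ℕ → ZMod p} (h : Dg p J d F) (a : ℕ → ZMod p) :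
    Dg p J (d + 1) (fun I => (∑ i ∈ I, a i) * F I) := by
  have : Dg p J (d + 1) (fun I => ∑ j ∈ J, a j * (if {j} ⊆ I then F I else 0)) := by
    apply Dg.sum
    intro j hj
    apply Dg.smul
    exact h.mem {j} (by simpa using hj)
  refine this.congr fun I hI => ?_
  simp only [Finset.singleton_subset_iff, mul_ite, mul_zero]
  rw [← Finset.sum_filter, Finset.sum_mul]
  congr 1
  ext i; simp only [Finset.mem_filter]
  exact ⟨fun h => h.2, fun h => ⟨hI h, h⟩⟩

theorem Dg.linpow {J : Finset ℕ} {d : ℕ} {F : Finset ℕ → ZMod p} (h : Dg p J d F) (a : ℕ → ZMod p)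
    (k : ℕ) : Dg p J (d + k) (fun I => (∑ i ∈ I, a i) ^ k * F I) := by
  induction k with
  | zero => simpa using h
  | succ k ih =>
    refine (ih.lin a).congr fun I _ => ?_
    ring

theorem Dg.ind {J : Finset ℕ} {d : ℕ} {F : Finset ℕ → ZMod p} (h : Dg p J d F) (a : ℕ → ZMod p) :
    Dg p J (d + (p - 1)) (fun I => if ∑ i ∈ I, a i = 0 then F I else 0) := by
  have hp : 2 ≤ p := (Fact.out : p.Prime).two_le
  refine ((h.mono (Nat.le_add_right d (p - 1))).sub (h.linpow a (p - 1))).congr fun I _ => ?_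
  split_ifs with h0
  · rw [h0, zero_pow (by omega)]; ring
  · rw [ZMod.pow_card_sub_one_eq_one h0]; ring

theorem Dg.choose {J : Finset ℕ} {d : ℕ} {F : Finset ℕ → ZMod p} (h : Dg p J d F) (s : ℕ) :
    Dg p J (d + s) (fun I => (I.card.choose s : ZMod p) * F I) := by
  have : Dg p J (d + s) (fun I => ∑ L ∈ J.powersetCard s, (if L ⊆ I then F I else 0)) := by
    apply Dg.sum
    intro L hL
    rw [Finset.mem_powersetCard] at hL
    rw [← hL.2]
    exact h.mem L hL.1
  refine this.congr fun I hI => ?_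
  rw [← Finset.sum_filter, Finset.sum_const, nsmul_eq_mul]
  congr 2
  rw [← Finset.card_powersetCard]
  congr 1
  ext L
  simp only [Finset.mem_filter, Finset.mem_powersetCard]
  exact ⟨fun h => ⟨h.2, h.1.2⟩, fun h => ⟨⟨h.1.trans hI, h.2⟩, h.1⟩⟩

theorem Dg.final {J : Finset ℕ} {d : ℕ} {F : Finset ℕ → ZMod p} (h : Dg p J d F) (hd : d < J.card) :
    ∑ I ∈ J.powerset, (-1) ^ I.card * F I = 0 := by
  have := h ∅ (by simp) (by simpa using hd)
  simpa using this

/-- zero-sum condition -/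
def ZS {p : ℕ} (f : ℕ → ZMod p × ZMod p) (I : Finset ℕ) : Prop := ∑ i ∈ I, f i = 0

instance {p : ℕ} (f : ℕ → ZMod p × ZMod p) : DecidablePred (ZS f) := fun I =>
  inferInstanceAs (Decidable (∑ i ∈ I, f i = 0))

theorem ZS_iff {p : ℕ} (f : ℕ → ZMod p × ZMod p) (I : Finset ℕ) :
    ZS f I ↔ ∑ i ∈ I, (f i).1 = 0 ∧ ∑ i ∈ I, (f i).2 = 0 := by
  rw [ZS, Prod.ext_iff, Prod.fst_sum, Prod.snd_sum]; rfl

theorem cw_dg (f : ℕ → ZMod p × ZMod p) (J : Finset ℕ) (w : ℕ → ℕ) :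
    Dg p J (3 * (p - 1)) (fun I => if ZS f I ∧ p ∣ ∑ i ∈ I, w i then 1 else 0) := by
  have := (((Dg.one (p := p) J).ind (fun i => (f i).1)).ind (fun i => (f i).2)).ind
    (fun i => (w i : ZMod p))
  refine (this.mono (by omega)).congr fun I _ => ?_
  simp only [ZS_iff, ← Nat.cast_sum, ZMod.natCast_eq_zero_iff]
  split_ifs <;> simp_all

theorem cw (f : ℕ → ZMod p × ZMod p) (J : Finset ℕ) (w : ℕ → ℕ) (hJ : 3 * (p - 1) < J.card) :
    ∃ I ⊆ J, I.Nonempty ∧ ZS f I ∧ p ∣ ∑ i ∈ I, w i := by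
  by_contra hcon
  push Not at hcon
  have h := (cw_dg f J w).final hJ
  rw [Finset.sum_eq_single ∅] at h
  · simp [ZS] at h
  · intro I hI hne
    rw [if_neg, mul_zero]
    rintro ⟨h1, h2⟩
    exact hcon I (Finset.mem_powerset.1 hI) (Finset.nonempty_iff_ne_empty.2 hne) h1 h2
  · simp

def cnt {p : ℕ} (f : ℕ → ZMod p × ZMod p) (J : Finset ℕ) (s : ℕ) : ℕ :=
  ((J.powersetCard s).filter (fun I => ZS f I)).card

theorem rel_gen (f : ℕ → ZMod p × ZMod p) (J : Finset ℕ) (M : ℕ) (hM : J.card < M * p)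
    (c : ℕ → ZMod p) (h : ∑ I ∈ J.powerset, (-1 : ZMod p) ^ I.card *
      (c I.card * (if ZS f I ∧ p ∣ ∑ i ∈ I, 1 then 1 else 0)) = 0) :
    ∑ k ∈ Finset.range M, (-1 : ZMod p) ^ k * c (k * p) * (cnt f J (k * p) : ZMod p) = 0 := by
  have hp : p.Prime := Fact.out
  refine Eq.trans ?_ h
  have h1 : ∑ I ∈ J.powerset, (-1 : ZMod p) ^ I.card *
      (c I.card * (if ZS f I ∧ p ∣ ∑ i ∈ I, 1 then 1 else 0)) =
      ∑ I ∈ J.powerset.filter (fun I => ZS f I ∧ p ∣ I.card), (-1 : ZMod p) ^ I.card * c I.card := by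
    rw [Finset.sum_filter]
    apply Finset.sum_congr rfl
    intro I _
    simp
  rw [h1]
  rw [← Finset.sum_fiberwise_of_maps_to (s := J.powerset.filter (fun I => ZS f I ∧ p ∣ I.card))
    (t := Finset.range M) (g := fun I => I.card / p)]
  · apply Finset.sum_congr rfl
    intro k _
    have h2 : ((J.powerset.filter (fun I => ZS f I ∧ p ∣ I.card)).filter (fun I => I.card / p = k))
        = (J.powersetCard (k * p)).filter (fun I => ZS f I) := by
      ext I
      simp only [Finset.mem_filter, Finset.mem_powerset, Finset.mem_powersetCard]
      constructor
      · rintro ⟨⟨h1, h2, h3⟩, h4⟩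
        refine ⟨⟨h1, ?_⟩, h2⟩
        rw [← h4, Nat.div_mul_cancel h3]
      · rintro ⟨⟨h1, h3⟩, h2⟩
        refine ⟨⟨h1, h2, ?_⟩, ?_⟩
        · rw [h3]; exact Dvd.intro_left k rfl
        · rw [h3]; exact Nat.mul_div_cancel _ hp.pos
    rw [h2]
    rw [Finset.sum_congr rfl (g := fun _ => (-1 : ZMod p) ^ k * c (k * p))]
    · rw [Finset.sum_const, nsmul_eq_mul, cnt]; ring
    · intro I hI
      have := (Finset.mem_powersetCard.1 (Finset.mem_filter.1 hI).1).2
      rw [this, mul_comm k p, pow_mul]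
      congr 2
      exact ZMod.pow_card _
  · intro I hI
    simp only [Finset.mem_filter, Finset.mem_powerset] at hI
    rw [Finset.mem_range]
    apply Nat.div_lt_of_lt_mul
    have := Finset.card_le_card hI.1
    rw [mul_comm]; omega

theorem rel1 (f : ℕ → ZMod p × ZMod p) (J : Finset ℕ) (M : ℕ) (hM : J.card < M * p)
    (hJ : 3 * (p - 1) < J.card) :
    ∑ k ∈ Finset.range M, (-1 : ZMod p) ^ k * (cnt f J (k * p) : ZMod p) = 0 := by
  have := rel_gen f J M hM (fun _ => 1) (by simpa using (cw_dg f J (fun _ => 1)).final hJ)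
  simpa using this

theorem rel2 (f : ℕ → ZMod p × ZMod p) (J : Finset ℕ) (M : ℕ) (hM : J.card < M * p)
    (hJ : 3 * (p - 1) + p < J.card) :
    ∑ k ∈ Finset.range M, (-1 : ZMod p) ^ k * k * (cnt f J (k * p) : ZMod p) = 0 := by
  have hp : p.Prime := Fact.out
  have := rel_gen f J M hM (fun s => (s.choose p : ZMod p))
    (((cw_dg f J (fun _ => 1)).choose p).final hJ)
  refine Eq.trans ?_ this
  apply Finset.sum_congr rfl
  intro k _
  congr 2
  have h := Choose.choose_modEq_choose_mod_mul_choose_div_nat (p := p) (n := k * p) (k := p)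
  rw [Nat.mul_mod_left, Nat.mod_self, Nat.mul_div_cancel _ hp.pos, Nat.div_self hp.pos] at h
  simp at h
  exact ((ZMod.natCast_eq_natCast_iff _ _ _).2 h).symm

theorem cnt_zero (f : ℕ → ZMod p × ZMod p) (J : Finset ℕ) : cnt f J 0 = 1 := by
  simp [cnt, ZS, Finset.filter_singleton]

theorem cnt_eq_zero {f : ℕ → ZMod p × ZMod p} {J : Finset ℕ} {s : ℕ} :
    cnt f J s = 0 ↔ ∀ I ⊆ J, I.card = s → ¬ ZS f I := by
  rw [cnt, Finset.card_eq_zero, Finset.filter_eq_empty_iff]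
  constructor
  · intro h I h1 h2
    exact h (Finset.mem_powersetCard.2 ⟨h1, h2⟩)
  · intro h I h1
    rw [Finset.mem_powersetCard] at h1
    exact h I h1.1 h1.2

theorem cnt_insert (f f' : ℕ → ZMod p × ZMod p) (J : Finset ℕ) (z : ℕ) (hz : z ∉ J)
    (hf : ∀ i ∈ J, f' i = f i) (hfz : f' z = 0) (s : ℕ) :
    cnt f' (insert z J) (s + 1) = cnt f J (s + 1) + cnt f J s := by
  have hZ : ∀ I ⊆ J, (ZS f' I ↔ ZS f I) := by
    intro I hI
    rw [ZS, ZS, Finset.sum_congr rfl (fun i hi => hf i (hI hi))]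
  rw [cnt, Finset.powersetCard_succ_insert hz, Finset.filter_union, Finset.card_union_of_disjoint]
  · congr 1
    · rw [cnt]
      congr 1
      apply Finset.filter_congr
      intro I hI
      exact hZ I (Finset.mem_powersetCard.1 hI).1
    · rw [Finset.filter_image, Finset.card_image_of_injOn, cnt]
      · congr 1
        apply Finset.filter_congr
        intro I hI
        have hI := (Finset.mem_powersetCard.1 hI).1
        rw [← hZ I hI, ZS, ZS, Finset.sum_insert (fun h => hz (hI h)), hfz, zero_add]
      · intro I hI I' hI' h
        simp only [Finset.coe_filter, Finset.mem_powersetCard, Set.mem_ofPred_eq] at hI hI'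
        have h1 := congrArg (fun S => S.erase z) h
        simpa [Finset.erase_insert (fun h => hz (hI.1.1 h)),
          Finset.erase_insert (fun h => hz (hI'.1.1 h))] using h1
  · rw [Finset.disjoint_left]
    intro I h1 h2
    simp only [Finset.mem_filter, Finset.mem_powersetCard, Finset.mem_image] at h1 h2
    obtain ⟨⟨I', _, rfl⟩, _⟩ := h2
    exact hz (h1.1.1 (by simp))

theorem double_count (f : ℕ → ZMod p × ZMod p) (J : Finset ℕ) (s t : ℕ) :
    ∑ A ∈ (J.powersetCard s).filter (fun I => ZS f I), cnt f (J \ A) t =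
    ∑ D ∈ (J.powersetCard (s + t)).filter (fun I => ZS f I), cnt f D t := by
  simp only [cnt]
  rw [← Finset.card_sigma, ← Finset.card_sigma]
  refine Finset.card_bij' (fun x _ => ⟨x.1 ∪ x.2, x.2⟩) (fun x _ => ⟨x.1 \ x.2, x.2⟩) ?_ ?_ ?_ ?_
  · rintro ⟨A, C⟩ h
    simp only [Finset.mem_sigma, Finset.mem_filter, Finset.mem_powersetCard] at h ⊢
    obtain ⟨⟨⟨h1, h2⟩, h3⟩, ⟨h4, h5⟩, h6⟩ := h
    have hd : Disjoint A C := Finset.disjoint_of_subset_right h4 Finset.disjoint_sdiff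
    refine ⟨⟨⟨Finset.union_subset h1 (h4.trans Finset.sdiff_subset), ?_⟩, ?_⟩,
      ⟨Finset.subset_union_right, h5⟩, h6⟩
    · rw [Finset.card_union_of_disjoint hd, h2, h5]
    · rw [ZS] at h3 h6 ⊢
      rw [Finset.sum_union hd, h3, h6, add_zero]
  · rintro ⟨D, C⟩ h
    simp only [Finset.mem_sigma, Finset.mem_filter, Finset.mem_powersetCard] at h ⊢
    obtain ⟨⟨⟨h1, h2⟩, h3⟩, ⟨h4, h5⟩, h6⟩ := h
    refine ⟨⟨⟨Finset.sdiff_subset.trans h1, ?_⟩, ?_⟩, ⟨?_, h5⟩, h6⟩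
    · rw [Finset.card_sdiff_of_subset h4]; omega
    · rw [ZS] at h3 h6 ⊢
      have := Finset.sum_sdiff (f := f) h4
      rw [h6, h3, add_zero] at this
      exact this
    · intro i hi
      simp [h1 (h4 hi), hi]
  · rintro ⟨A, C⟩ h
    simp only [Finset.mem_sigma, Finset.mem_filter, Finset.mem_powersetCard] at h ⊢
    have hd : Disjoint A C := Finset.disjoint_of_subset_right h.2.1.1 Finset.disjoint_sdiff
    rw [Finset.union_sdiff_cancel_right hd]
  · rintro ⟨D, C⟩ h
    simp only [Finset.mem_sigma, Finset.mem_filter, Finset.mem_powersetCard] at h ⊢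
    rw [Finset.sdiff_union_of_subset h.2.1.1]

theorem kemnitz_exact (f : ℕ → ZMod p × ZMod p) (J : Finset ℕ) (hJ : J.card + 3 = 4 * p) :
    ∃ I ⊆ J, I.card = p ∧ ZS f I := by
  have hp : p.Prime := Fact.out
  have hp2 := hp.two_le
  by_contra hcon
  push Not at hcon
  rcases hp2.eq_or_lt with rfl | hp3
  · obtain ⟨i, hi, j, hj, hij, he⟩ := Finset.exists_ne_map_eq_of_card_lt_of_maps_to
      (s := J) (t := (Finset.univ : Finset (ZMod 2 × ZMod 2))) (f := f)
      (by simp [ZMod.card]; omega) (fun _ _ => by simp)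
    refine hcon {i, j} ?_ (Finset.card_pair hij) ?_
    · intro x hx
      simp at hx
      rcases hx with rfl | rfl <;> assumption
    · rw [ZS, Finset.sum_pair hij, he]
      generalize f j = x
      revert x
      decide
  have h1 : cnt f J p = 0 := cnt_eq_zero.2 hcon
  have hsub : ∀ D ⊆ J, cnt f D p = 0 := fun D hD => cnt_eq_zero.2 fun I hI => hcon I (hI.trans hD)
  have hD2 : ∀ D ⊆ J, 3 * (p - 1) < D.card → D.card < 3 * p → (cnt f D (2 * p) : ZMod p) = -1 := by
    intro D hD h2 h3
    have := rel1 f D 3 h3 h2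
    simp [Finset.sum_range_succ, cnt_zero, hsub D hD] at this
    linear_combination this
  have h3p : cnt f J (3 * p) = 0 := by
    rw [cnt_eq_zero]
    intro D hD hc hz
    obtain ⟨x, hx⟩ := Finset.card_pos.1 (show 0 < D.card by omega)
    have hc' := Finset.card_erase_of_mem hx
    have h5 := hD2 (D.erase x) ((Finset.erase_subset _ _).trans hD) (by omega) (by omega)
    have h6 : cnt f (D.erase x) (2 * p) ≠ 0 := by
      intro h6
      rw [h6] at h5
      simp at h5
    rw [Ne, cnt_eq_zero] at h6
    push Not at h6
    obtain ⟨C, hC, hCc, hCz⟩ := h6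
    have hCD : C ⊆ D := hC.trans (Finset.erase_subset _ _)
    refine hcon (D \ C) (Finset.sdiff_subset.trans hD) ?_ ?_
    · rw [Finset.card_sdiff_of_subset hCD]; omega
    · have := Finset.sum_sdiff (f := f) hCD
      rw [show ∑ i ∈ C, f i = 0 from hCz, show ∑ i ∈ D, f i = 0 from hz, add_zero] at this
      exact this
  -- adjoin a zero
  obtain ⟨z, hz⟩ := Infinite.exists_notMem_finset J
  have hci := Finset.card_insert_of_notMem hz
  have hins := cnt_insert f (Function.update f z 0) J z hz
    (fun i hi => Function.update_of_ne (by rintro rfl; exact hz hi) _ _) (by simp)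
  have r2 := rel1 (Function.update f z 0) (insert z J) 4 (by omega) (by omega)
  have r3 := rel2 (Function.update f z 0) (insert z J) 4 (by omega) (by omega)
  have e1 := hins (1 * p - 1)
  have e2 := hins (2 * p - 1)
  have e3 := hins (3 * p - 1)
  rw [show 1 * p - 1 + 1 = p by omega] at e1
  rw [show 2 * p - 1 + 1 = 2 * p by omega] at e2
  rw [show 3 * p - 1 + 1 = 3 * p by omega] at e3
  have dc := double_count f J (p - 1) (2 * p)
  have dc' := congrArg (Nat.cast : ℕ → ZMod p) dc
  rw [Nat.cast_sum, Nat.cast_sum, Finset.sum_congr rfl (g := fun _ => (-1 : ZMod p)),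
    Finset.sum_congr (s₂ := (J.powersetCard (p - 1 + 2 * p)).filter (fun I => ZS f I)) rfl
      (g := fun _ => (-1 : ZMod p))] at dc'
  rotate_left
  · intro D hD
    simp only [Finset.mem_filter, Finset.mem_powersetCard] at hD
    exact hD2 D hD.1.1 (by omega) (by omega)
  · intro A hA
    simp only [Finset.mem_filter, Finset.mem_powersetCard] at hA
    have := Finset.card_sdiff_of_subset hA.1.1
    exact hD2 _ Finset.sdiff_subset (by omega) (by omega)
  simp only [Finset.sum_const, nsmul_eq_mul] at dc'
  change (cnt f J (p - 1) : ZMod p) * -1 = (cnt f J (p - 1 + 2 * p) : ZMod p) * -1 at dc'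
  rw [show p - 1 + 2 * p = 3 * p - 1 by omega] at dc'
  simp [Finset.sum_range_succ, cnt_zero, h1, h3p, e1, e2, e3] at r2 r3
  have h20 : (2 : ZMod p) = 0 := by
    linear_combination 2 * r2 - r3 - dc'
  have : p ∣ 2 := by
    rw [← ZMod.natCast_eq_zero_iff]; exact_mod_cast h20
  have := Nat.le_of_dvd (by norm_num) this
  omega

theorem kemnitz (f : ℕ → ZMod p × ZMod p) (J : Finset ℕ) (hJ : 4 * p ≤ J.card + 3) :
    ∃ I ⊆ J, I.card = p ∧ ZS f I := by
  have hp2 := (Fact.out : p.Prime).two_le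
  obtain ⟨J', h1, h2⟩ := Finset.exists_subset_card_eq (s := J) (n := 4 * p - 3) (by omega)
  obtain ⟨I, h3, h4⟩ := kemnitz_exact f J' (by omega)
  exact ⟨I, h3.trans h1, h4⟩

end Kemnitz


theorem blocks {p : ℕ} [Fact p.Prime] (f : ℕ → ZMod p × ZMod p) (J : Finset ℕ) :
    ∀ c : ℕ, c * p + 3 * p ≤ J.card + 3 → ∃ B : ℕ → Finset ℕ,
      (∀ i < c, B i ⊆ J ∧ (B i).card = p ∧ ZS f (B i)) ∧
      (∀ i < c, ∀ j < c, i ≠ j → Disjoint (B i) (B j)) := by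
  intro c
  induction c with
  | zero => intro _; exact ⟨fun _ => ∅, by simp, by simp⟩
  | succ c ih =>
    intro h
    have hm : (c + 1) * p = c * p + p := by ring
    obtain ⟨B, h1, h2⟩ := ih (by omega)
    have hc : ((Finset.range c).biUnion B).card ≤ c * p := by
      refine Finset.card_biUnion_le.trans ?_
      rw [Finset.sum_congr rfl (fun i hi => (h1 i (Finset.mem_range.1 hi)).2.1)]
      simp
    have hc2 := Finset.le_card_sdiff ((Finset.range c).biUnion B) J
    obtain ⟨I, i1, i2, i3⟩ := kemnitz f (J \ (Finset.range c).biUnion B) (by omega)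
    have hdis : ∀ i < c, Disjoint (B i) I := by
      intro i hi
      rw [Finset.disjoint_left]
      intro x hx hxI
      have := (Finset.mem_sdiff.1 (i1 hxI)).2
      exact this (Finset.mem_biUnion.2 ⟨i, Finset.mem_range.2 hi, hx⟩)
    refine ⟨Function.update B c I, ?_, ?_⟩
    · intro i hi
      by_cases hic : i = c
      · subst hic
        rw [Function.update_self]
        exact ⟨i1.trans Finset.sdiff_subset, i2, i3⟩
      · rw [Function.update_of_ne hic]
        exact h1 i (by omega)
    · intro i hi j hj hij
      by_cases hic : i = c
      · subst hic
        rw [Function.update_self, Function.update_of_ne (Ne.symm hij)]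
        exact (hdis j (by omega)).symm
      · rw [Function.update_of_ne hic]
        by_cases hjc : j = c
        · subst hjc
          rw [Function.update_self]
          exact hdis i (by omega)
        · rw [Function.update_of_ne hjc]
          exact h2 i (by omega) j (by omega) hij

theorem flat_prod {M : Type*} [Monoid M] (F : ℕ → List ℕ) (g : ℕ → M) (l : List ℕ) :
    ((l.flatMap F).map g).prod = (l.map (fun i => ((F i).map g).prod)).prod := by
  induction l with
  | nil => simp
  | cons a l ih => simp [ih]

theorem flat_sum (F : ℕ → List ℕ) (g : ℕ → ℕ) (l : List ℕ) :
    ((l.flatMap F).map g).sum = (l.map (fun i => ((F i).map g).sum)).sum := by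
  induction l with
  | nil => simp
  | cons a l ih => simp [ih]

theorem step_final {G : Type*} [Group G] (g g' : ℕ → G) (w w' : ℕ → ℕ) (J J' : Finset ℕ) (p t : ℕ)
    (B : ℕ → Finset ℕ) (hB : ∀ i ∈ J', B i ⊆ J)
    (hd : ∀ i ∈ J', ∀ j ∈ J', i ≠ j → Disjoint (B i) (B j))
    (hg : ∀ i ∈ J', g' i = ((B i).toList.map g).prod)
    (hw : ∀ i ∈ J', ∑ j ∈ B i, w j = p * w' i) (h : Sel g' w' J' t) : Sel g w J (p * t) := by
  obtain ⟨l, h1, h2, h3, h4⟩ := h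
  refine ⟨l.flatMap (fun i => (B i).toList), ?_, ?_, ?_, ?_⟩
  · rw [List.nodup_flatMap]
    refine ⟨fun i _ => Finset.nodup_toList _, ?_⟩
    refine h1.pairwise_of_forall_ne ?_
    intro i hi j hj hij x hx hy
    exact Finset.disjoint_left.1 (hd i (h2 i hi) j (h2 j hj) hij) (Finset.mem_toList.1 hx)
      (Finset.mem_toList.1 hy)
  · intro x hx
    obtain ⟨i, hi, hx⟩ := List.mem_flatMap.1 hx
    exact hB i (h2 i hi) (Finset.mem_toList.1 hx)
  · rw [flat_sum, ← h3, ← List.sum_map_mul_left]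
    congr 1
    apply List.map_congr_left
    intro i hi
    rw [Finset.sum_map_toList, hw i (h2 i hi)]
  · rw [flat_prod, ← h4]
    congr 1
    apply List.map_congr_left
    intro i hi
    exact (hg i (h2 i hi)).symm

theorem step {G : Type*} [Group G] {p : ℕ} [Fact p.Prime] (K K1 : Set G) (M A : ℕ) (hM : 1 ≤ M)
    (f : G → ZMod p × ZMod p)
    (hf : ∀ l : List G, (∀ x ∈ l, x ∈ K) → (l.map f).sum = 0 → l.prod ∈ K1)
    (h : PS K1 M A) : PS K (p * (p * M)) (p * (A + 2) - 2) := by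
  have hp2 := (Fact.out : p.Prime).two_le
  intro k g w J hk hg hw hc
  set X := k * p * M + A + 2 with hX
  have hkp : 2 ≤ k * p := by nlinarith
  have hkpM : 2 ≤ k * p * M := by nlinarith
  have hcX : p * X ≤ J.card + 2 := by
    have e : p * X = k * (p * (p * M)) + p * (A + 2) := by rw [hX]; ring
    have : 2 ≤ p * (A + 2) := by nlinarith
    omega
  obtain ⟨J1, hJ1, hJ1w, hJ1c, hbig⟩ : ∃ J1 ⊆ J, (∀ i ∈ J1, w i = 1) ∧ J.card ≤ J1.card + 1 ∧
      ∀ R ⊆ J, R.card ≤ ∑ i ∈ R, w i ∧ ∑ i ∈ R, w i ≤ R.card + 1 := by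
    rcases hw with hw | ⟨hk2, j0, hj0, h2, hw⟩
    · refine ⟨J, subset_rfl, hw, by omega, fun R hR => ?_⟩
      rw [Finset.sum_congr rfl (fun i hi => hw i (hR hi))]
      simp
    · refine ⟨J.erase j0, Finset.erase_subset _ _, ?_, ?_, ?_⟩
      · intro i hi
        exact hw i (Finset.mem_of_mem_erase hi) (Finset.ne_of_mem_erase hi)
      · rw [Finset.card_erase_of_mem hj0]; omega
      · intro R hR
        have : ∀ i ∈ R, w i = 1 + if i = j0 then 1 else 0 := by
          intro i hi
          split_ifs with hij
          · rw [hij, h2]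
          · exact hw i (hR hi) hij
        rw [Finset.sum_congr rfl this, Finset.sum_add_distrib, Finset.sum_ite_eq']
        split_ifs <;> simp
  obtain ⟨c, hcc⟩ : ∃ c, X = c + 3 := ⟨X - 3, by omega⟩
  have hpX : p * X = c * p + 3 * p := by rw [hcc]; ring
  obtain ⟨B, b1, b2⟩ := blocks (fun i => f (g i)) J1 c (by omega)
  have hcu : ((Finset.range c).biUnion B).card ≤ c * p := by
    refine Finset.card_biUnion_le.trans ?_
    rw [Finset.sum_congr rfl (fun i hi => (b1 i (Finset.mem_range.1 hi)).2.1)]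
    simp
  have hc2 := Finset.le_card_sdiff ((Finset.range c).biUnion B) J
  obtain ⟨R, r1, r2⟩ := Finset.exists_subset_card_eq
    (s := J \ (Finset.range c).biUnion B) (n := 3 * p - 2) (by omega)
  have rJ : R ⊆ J := r1.trans Finset.sdiff_subset
  obtain ⟨I, i1, i2, i3, v, hv⟩ := cw (fun i => f (g i)) R w (by omega)
  have hI1 := hbig I (i1.trans rJ)
  have hIc := Finset.card_le_card i1
  have hIp := i2.card_pos
  have hv1 : 1 ≤ v := by
    rcases Nat.eq_zero_or_pos v with h0 | h0
    · rw [h0] at hv; omega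
    · exact h0
  have hv2 : v ≤ 2 := by
    by_contra hcon
    have : p * 3 ≤ p * v := Nat.mul_le_mul_left _ (by omega)
    omega
  have hdis : ∀ i < c, Disjoint (B i) I := by
    intro i hi
    rw [Finset.disjoint_left]
    intro x hx hxI
    have := (Finset.mem_sdiff.1 (r1 (i1 hxI))).2
    exact this (Finset.mem_biUnion.2 ⟨i, Finset.mem_range.2 hi, hx⟩)
  set B' : ℕ → Finset ℕ := Function.update B c I with hB'
  set w' : ℕ → ℕ := fun i => if i = c then v else 1 with hw'
  have hBJ : ∀ i ∈ Finset.range (c + 1), B' i ⊆ J ∧ ZS (fun i => f (g i)) (B' i) ∧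
      ∑ j ∈ B' i, w j = p * w' i := by
    intro i hi
    rw [Finset.mem_range] at hi
    by_cases hic : i = c
    · subst hic
      simp only [hB', hw', Function.update_self, if_true]
      exact ⟨i1.trans rJ, i3, hv⟩
    · simp only [hB', hw', Function.update_of_ne hic, if_neg hic]
      obtain ⟨q1, q2, q3⟩ := b1 i (by omega)
      refine ⟨q1.trans hJ1, q3, ?_⟩
      rw [Finset.sum_congr rfl (fun i hi => hJ1w i (q1 hi))]
      simp [q2]
  have hBd : ∀ i ∈ Finset.range (c + 1), ∀ j ∈ Finset.range (c + 1), i ≠ j →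
      Disjoint (B' i) (B' j) := by
    intro i hi j hj hij
    rw [Finset.mem_range] at hi hj
    by_cases hic : i = c
    · subst hic
      rw [hB', Function.update_self, Function.update_of_ne (Ne.symm hij)]
      exact (hdis j (by omega)).symm
    · rw [hB', Function.update_of_ne hic]
      by_cases hjc : j = c
      · subst hjc
        rw [Function.update_self]
        exact hdis i (by omega)
      · rw [Function.update_of_ne hjc]
        exact b2 i (by omega) j (by omega) hij
  have hs := h (k * p) (fun i => ((B' i).toList.map g).prod) w' (Finset.range (c + 1)) (by omega)
    (by
      intro i hi
      obtain ⟨q1, q2, q3⟩ := hBJ i hi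
      apply hf
      · intro x hx
        obtain ⟨j, hj, rfl⟩ := List.mem_map.1 hx
        exact hg j (q1 (Finset.mem_toList.1 hj))
      · rw [List.map_map, ← q2, ← Finset.sum_map_toList]
        rfl)
    (by
      rcases (show v = 1 ∨ v = 2 by omega) with hv | hv
      · left; intro i _; simp [hw', hv]
      · right
        refine ⟨hkp, c, by simp, by simp [hw', hv], fun i _ hic => by simp [hw', hic]⟩)
    (by rw [Finset.card_range]; omega)
  have := step_final g _ w w' J _ p _ B' (fun i hi => (hBJ i hi).1) hBd (fun _ _ => rfl)
    (fun i hi => (hBJ i hi).2.2) hs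
  rw [show k * (p * (p * M)) = p * (k * p * M) by ring]
  exact this


/-- divided residue -/
def FD {m : ℕ} (p d : ℕ) (z : ZMod m) : ZMod p := ((z.val / d : ℕ) : ZMod p)

theorem FD_cast {m d q p : ℕ} (hm : 0 < m) (hdq : d * q = m) (hpq : p ∣ q) (a : ℕ) :
    d ∣ (((d * a : ℕ) : ZMod m)).val ∧ FD p d ((d * a : ℕ) : ZMod m) = (a : ZMod p) := by
  have hd : 0 < d := Nat.pos_of_ne_zero (by rintro rfl; simp at hdq; omega)
  have h1 : (((d * a : ℕ) : ZMod m)).val = d * (a % q) := by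
    rw [ZMod.val_natCast, ← hdq, Nat.mul_mod_mul_left]
  refine ⟨h1 ▸ Dvd.intro _ rfl, ?_⟩
  rw [FD, h1, Nat.mul_div_cancel_left _ hd, ZMod.natCast_eq_natCast_iff]
  exact (Nat.mod_modEq a q).of_dvd hpq

theorem FD_rep {m d : ℕ} [NeZero m] (z : ZMod m) (h : d ∣ z.val) : ∃ a : ℕ, z = ((d * a : ℕ) : ZMod m) := by
  obtain ⟨a, ha⟩ := h
  exact ⟨a, by rw [← ha, ZMod.natCast_zmod_val]⟩

theorem FD_add {m d q p : ℕ} [NeZero m] (hdq : d * q = m) (hpq : p ∣ q) (z z' : ZMod m)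
    (h : d ∣ z.val) (h' : d ∣ z'.val) :
    d ∣ (z + z').val ∧ FD p d (z + z') = FD p d z + FD p d z' := by
  have hm : 0 < m := NeZero.pos m
  obtain ⟨a, rfl⟩ := FD_rep z h
  obtain ⟨b, rfl⟩ := FD_rep z' h'
  have h3 := FD_cast hm hdq hpq (a + b)
  have e : ((d * a : ℕ) : ZMod m) + ((d * b : ℕ) : ZMod m) = ((d * (a + b) : ℕ) : ZMod m) := by
    push_cast; ring
  rw [e, h3.2, (FD_cast hm hdq hpq a).2, (FD_cast hm hdq hpq b).2]
  exact ⟨h3.1, by push_cast; ring⟩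

theorem FD_mul {m d q p : ℕ} [NeZero m] (hdq : d * q = m) (hpq : p ∣ q) (t z : ZMod m)
    (h : d ∣ z.val) :
    d ∣ (t * z).val ∧ FD p d (t * z) = (t.val : ZMod p) * FD p d z := by
  have hm : 0 < m := NeZero.pos m
  obtain ⟨a, rfl⟩ := FD_rep z h
  have h3 := FD_cast hm hdq hpq (t.val * a)
  have e : t * ((d * a : ℕ) : ZMod m) = ((d * (t.val * a) : ℕ) : ZMod m) := by
    push_cast; rw [ZMod.natCast_zmod_val]; ring
  rw [e, h3.2, (FD_cast hm hdq hpq a).2]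
  exact ⟨h3.1, by push_cast; ring⟩

theorem FD_zero {m d p : ℕ} (z : ZMod m) (h : d ∣ z.val) (h0 : FD p d z = 0) :
    d * p ∣ z.val := by
  rw [FD, ZMod.natCast_eq_zero_iff] at h0
  obtain ⟨a, ha⟩ := h
  rw [ha] at h0 ⊢
  rcases Nat.eq_zero_or_pos d with rfl | hd
  · simp
  · rw [Nat.mul_div_cancel_left _ hd] at h0
    exact Nat.mul_dvd_mul_left _ h0

theorem unip {m d q p : ℕ} [NeZero m] (hdq : d * q = m) (hp : p.Prime) (hpq : p = q.minFac)
    (c : ZMod m → ZMod m) (hc : ∀ a b, c (a + b) = c a * c b) (hc0 : c 0 = 1) (y : ZMod m)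
    (hy : d ∣ y.val) : ((c y).val : ZMod p) = 1 := by
  haveI := Fact.mk hp
  have hpd : p ∣ q := hpq ▸ Nat.minFac_dvd q
  have hpm : p ∣ m := hdq ▸ Dvd.dvd.mul_left hpd d
  have hq0 : q ≠ 0 := by rintro rfl; simp at hdq; exact NeZero.ne m hdq.symm
  have hpow : ∀ (k : ℕ) (a : ZMod m), c (k * a) = c a ^ k := by
    intro k a
    induction k with
    | zero => simp [hc0]
    | succ k ih => push_cast; rw [add_mul, one_mul, hc, ih, pow_succ]
  have h1 : c y ^ q = 1 := by
    obtain ⟨a, rfl⟩ := FD_rep y hy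
    rw [← hpow, ← hc0]
    congr 1
    have : ((q : ℕ) : ZMod m) * ((d * a : ℕ) : ZMod m) = ((m * a : ℕ) : ZMod m) := by
      rw [← hdq]; push_cast; ring
    rw [this]; simp
  set C : ZMod p := ((c y).val : ZMod p) with hC
  have h2 : C ^ q = 1 := by
    have e : C = ZMod.castHom hpm (ZMod p) (c y) := by
      rw [hC, ZMod.castHom_apply, ZMod.cast_eq_val]
    rw [e, ← map_pow, h1, map_one]
  have hC0 : C ≠ 0 := by
    intro h
    rw [h, zero_pow hq0] at h2
    exact zero_ne_one h2
  have h3 : C ^ (p - 1) = 1 := ZMod.pow_card_sub_one_eq_one hC0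
  have hcop : Nat.Coprime q (p - 1) := by
    rw [Nat.coprime_iff_gcd_eq_one]
    by_contra hg
    have hpr := Nat.minFac_prime hg
    have hd1 := (Nat.minFac_dvd (q.gcd (p - 1)))
    have hle := Nat.minFac_le_of_dvd hpr.two_le (hd1.trans (Nat.gcd_dvd_left _ _))
    have hle2 := Nat.le_of_dvd (by have := hp.two_le; omega) (hd1.trans (Nat.gcd_dvd_right _ _))
    have := hp.two_le
    omega
  have h4 : orderOf C ∣ 1 := by
    rw [← hcop]
    exact Nat.dvd_gcd (orderOf_dvd_of_pow_eq_one h2) (orderOf_dvd_of_pow_eq_one h3)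
  exact orderOf_eq_one_iff.1 (Nat.dvd_one.1 h4)

theorem main_ind {G : Type*} [Group G] [Fintype G] {m : ℕ} [NeZero m] (N : Subgroup G)
    (x y : G → ZMod m) (c : ZMod m → ZMod m)
    (hc : ∀ a b, c (a + b) = c a * c b) (hc0 : c 0 = 1)
    (hx : ∀ g h, x (g * h) = x g + c (y g) * x h) (hy : ∀ g h, y (g * h) = y g + y h)
    (hx1 : x 1 = 0) (hy1 : y 1 = 0) (hN : ∀ g, x g = 0 → y g = 0 → g ∈ N) :
    ∀ q d : ℕ, d * q = m → PS {g : G | d ∣ (x g).val ∧ d ∣ (y g).val}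
      (Nat.card N * q ^ 2) (Nat.card N * q + q - 2) := by
  have hn : 0 < Nat.card N := Nat.card_pos
  intro q
  induction q using Nat.strong_induction_on with
  | _ q ih =>
  intro d hdq
  have hm : 0 < m := NeZero.pos m
  have hq0 : q ≠ 0 := by rintro rfl; simp at hdq; omega
  by_cases hq1 : q = 1
  · subst hq1
    have hb := base_sub N {g : G | d ∣ (x g).val ∧ d ∣ (y g).val} (by
      rintro g ⟨h1, h2⟩
      have hd : d = m := by omega
      subst hd
      apply hN
      · rw [← ZMod.val_eq_zero]; exact Nat.eq_zero_of_dvd_of_lt h1 (ZMod.val_lt _)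
      · rw [← ZMod.val_eq_zero]; exact Nat.eq_zero_of_dvd_of_lt h2 (ZMod.val_lt _))
    simpa using hb
  · set p := q.minFac with hpdef
    have hp : p.Prime := Nat.minFac_prime hq1
    haveI := Fact.mk hp
    have hpq : p ∣ q := Nat.minFac_dvd q
    obtain ⟨q', hq'⟩ := hpq
    have hq'0 : 0 < q' := Nat.pos_of_ne_zero (by rintro rfl; omega)
    have hlt : q' < q := by have := hp.two_le; rw [hq']; nlinarith
    have hI := ih q' hlt (d * p) (by rw [mul_assoc, ← hq', hdq])
    have hs := step {g : G | d ∣ (x g).val ∧ d ∣ (y g).val}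
      {g : G | d * p ∣ (x g).val ∧ d * p ∣ (y g).val} _ _
      (Nat.mul_pos hn (pow_pos hq'0 2)) (fun g => (FD p d (x g), FD p d (y g))) (by
        intro l hl hsum
        have key : (d ∣ (x l.prod).val ∧ d ∣ (y l.prod).val) ∧
            (FD p d (x l.prod), FD p d (y l.prod)) =
              (l.map (fun g => (FD p d (x g), FD p d (y g)))).sum := by
          clear hsum
          induction l with
          | nil => simp [hx1, hy1, FD]
          | cons a l ih2 =>
            obtain ⟨⟨k1, k2⟩, k3⟩ := ih2 (fun x hx => hl x (by simp [hx]))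
            obtain ⟨a1, a2⟩ := hl a (by simp)
            rw [List.prod_cons, List.map_cons, List.sum_cons, ← k3, hx, hy]
            have hpq : p ∣ q := Nat.minFac_dvd q
            have u1 := unip hdq hp rfl c hc hc0 (y a) a2
            have u2 := FD_mul hdq hpq (c (y a)) (x l.prod) k1
            have u3 := FD_add hdq hpq (x a) _ a1 u2.1
            have u4 := FD_add hdq hpq (y a) _ a2 k2
            refine ⟨⟨u3.1, u4.1⟩, ?_⟩
            rw [u3.2, u4.2, u2.2, u1, one_mul]
            rfl
        rw [hsum] at key
        obtain ⟨⟨k1, k2⟩, k3⟩ := key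
        rw [Prod.mk_eq_zero] at k3
        exact ⟨FD_zero _ k1 k3.1, FD_zero _ k2 k3.2⟩) hI
    have e1 : p * (p * (Nat.card N * q' ^ 2)) = Nat.card N * q ^ 2 := by
      rw [hq']; ring
    have e2 : p * (Nat.card N * q' + q' - 2 + 2) - 2 = Nat.card N * q + q - 2 := by
      have : 1 ≤ Nat.card N * q' := Nat.mul_pos hn hq'0
      rw [Nat.sub_add_cancel (by omega), hq']
      congr 1
      ring
    rw [e1, e2] at hs
    exact hs


theorem lower_bound {G : Type*} [Group G] [Fintype G] (d E : ℕ)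
    (hd : IsGreatest {k : ℕ | ∃ S : Multiset G, Multiset.card S = k ∧ ProductOneFree S} d)
    (hE : IsLeast {l : ℕ | ∀ S : Multiset G, l ≤ Multiset.card S →
      ∃ T ≤ S, Multiset.card T = Fintype.card G ∧ IsProductOne T} E) :
    Fintype.card G + d ≤ E := by
  classical
  obtain ⟨S, hS, hfree⟩ := hd.1
  have hpos : 0 < Fintype.card G := Fintype.card_pos
  by_contra hcon
  obtain ⟨T, hT, hTc, l, hl, hprod⟩ := hE.1 (S + Multiset.replicate (Fintype.card G - 1) 1)
    (by rw [Multiset.card_add, Multiset.card_replicate, hS]; omega)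
  have h1S : ∀ x ∈ S, x ≠ 1 := by
    rintro x hx rfl
    exact hfree {1} (Multiset.singleton_le.2 hx) (by simp) ⟨[1], by simp, by simp⟩
  have hle : T.filter (fun x => x ≠ 1) ≤ S := by
    have := Multiset.filter_le_filter (fun x : G => x ≠ 1) hT
    rw [Multiset.filter_add, Multiset.filter_eq_self.2 h1S,
      Multiset.filter_eq_nil (s := Multiset.replicate (Fintype.card G - 1) 1) |>.2 (fun x hx => by simp [Multiset.eq_of_mem_replicate hx]),
      add_zero] at this
    exact this
  refine hfree _ hle ?_ ⟨l.filter (fun x => x ≠ 1), ?_, ?_⟩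
  · intro h0
    rw [Multiset.filter_eq_nil] at h0
    have hT1 : T = Multiset.replicate (Fintype.card G) 1 :=
      Multiset.eq_replicate.2 ⟨hTc, fun x hx => by simpa using h0 x hx⟩
    have h3 := Multiset.count_le_of_le 1 hT
    rw [hT1, Multiset.count_replicate_self, Multiset.count_add, Multiset.count_replicate_self,
      Multiset.count_eq_zero_of_notMem (fun h => h1S 1 h rfl)] at h3
    omega
  · rw [← hl, Multiset.filter_coe]
  · refine Eq.trans ?_ hprod
    clear hl hprod
    induction l with
    | nil => simp
    | cons a l ih =>
      by_cases ha : a = 1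
      · rw [List.filter_cons_of_neg (by simp [ha]), ih, List.prod_cons, ha, one_mul]
      · rw [List.filter_cons_of_pos (by simp [ha]), List.prod_cons, ih, List.prod_cons]

theorem upper_aux {G : Type*} [Group G] [Fintype G] (A : ℕ)
    (h : PS (Set.univ : Set G) (Fintype.card G) A) (S : Multiset G)
    (hS : Fintype.card G + A ≤ Multiset.card S) :
    ∃ T ≤ S, Multiset.card T = Fintype.card G ∧ IsProductOne T := by
  classical
  induction S using Quotient.inductionOn with
  | _ s =>
  obtain ⟨l, h1, h2, h3, h4⟩ := h 1 (fun i => s.getD i 1) (fun _ => 1) (Finset.range s.length)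
    le_rfl (fun _ _ => Set.mem_univ _) (Or.inl fun _ _ => rfl) (by
      simpa using hS)
  refine ⟨((l.map (fun i => s.getD i 1) : List G) : Multiset G), ?_, ?_, _, rfl, h4⟩
  · have e : (s : Multiset G) = (((List.range s.length).map (fun i => s.getD i 1) : List G) : Multiset G) := by
      congr 1
      apply List.ext_getElem
      · simp
      · intro i hi _
        simp [hi]
    change _ ≤ (s : Multiset G)
    rw [e, ← Multiset.map_coe, ← Multiset.map_coe]
    apply Multiset.map_le_map
    rw [Multiset.le_iff_subset (Multiset.coe_nodup.2 h1)]
    intro i hi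
    simpa using h2 i (by simpa using hi)
  · have : l.length = Fintype.card G := by simpa using h3
    simpa using this

theorem upper_bound {G : Type*} [Group G] [Fintype G]
    (m : ℕ) (hm : 0 < m)
    (φ : Multiplicative (ZMod m) →* MulAut (Multiplicative (ZMod m)))
    (N : Subgroup G) [N.Normal]
    (e : (G ⧸ N) ≃* (Multiplicative (ZMod m) ⋊[φ] Multiplicative (ZMod m))) :
    PS (Set.univ : Set G) (Fintype.card G) (Fintype.card G / m + m - 2) := by
  have : NeZero m := ⟨by omega⟩
  let ψ : G → Multiplicative (ZMod m) ⋊[φ] Multiplicative (ZMod m) := fun g => e (QuotientGroup.mk g)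
  have hψ : ∀ g h, ψ (g * h) = ψ g * ψ h := by
    intro g h
    simp [ψ]
  have hψ1 : ψ 1 = 1 := by simp [ψ]
  let c : ZMod m → ZMod m := fun a => (φ (Multiplicative.ofAdd a) (Multiplicative.ofAdd 1)).toAdd
  have hφ : ∀ a z : ZMod m, (φ (Multiplicative.ofAdd a) (Multiplicative.ofAdd z)).toAdd = c a * z := by
    intro a z
    have h1 : Multiplicative.ofAdd z = (Multiplicative.ofAdd (1 : ZMod m)) ^ z.val := by
      rw [← ofAdd_nsmul]; simp
    rw [h1, map_pow, toAdd_pow, nsmul_eq_mul, ZMod.natCast_zmod_val, mul_comm]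
  have key := main_ind (G := G) (m := m) N (fun g => (ψ g).left.toAdd) (fun g => (ψ g).right.toAdd) c
    (by
      intro a b
      have : c (a + b) = (φ (Multiplicative.ofAdd a)
          (Multiplicative.ofAdd (c b))).toAdd := by
        simp only [c, ofAdd_add, map_mul, MulAut.mul_apply, ofAdd_toAdd]
      rw [this, hφ])
    (by simp [c])
    (by
      intro g h
      have := hφ (ψ g).right.toAdd (ψ h).left.toAdd
      rw [ofAdd_toAdd, ofAdd_toAdd] at this
      rw [hψ, SemidirectProduct.mul_left, toAdd_mul, this])
    (by intro g h; rw [hψ, SemidirectProduct.mul_right, toAdd_mul])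
    (by simp [hψ1]) (by simp [hψ1])
    (by
      intro g h1 h2
      have : ψ g = 1 := SemidirectProduct.ext h1 h2
      have h3 : (QuotientGroup.mk g : G ⧸ N) = 1 := by
        simpa [ψ] using this
      exact (QuotientGroup.eq_one_iff g).1 h3) m 1 (one_mul m)
  have hcard : Fintype.card G = Nat.card N * m ^ 2 := by
    rw [← Nat.card_eq_fintype_card, Subgroup.card_eq_card_quotient_mul_card_subgroup N,
      Nat.card_congr e.toEquiv, Nat.card_congr SemidirectProduct.equivProd, Nat.card_prod]
    have : Nat.card (Multiplicative (ZMod m)) = m := Nat.card_zmod m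
    rw [this]; ring
  have hdiv : Fintype.card G / m = Nat.card N * m := by
    rw [hcard, pow_two, ← mul_assoc, Nat.mul_div_cancel _ hm]
  rw [hdiv, hcard]
  simpa using key

end Aux

theorem E_bounds_of_quotient_semidirect {G : Type*} [Group G] [Fintype G]
    (m : ℕ) (hm : 0 < m)
    (φ : Multiplicative (ZMod m) →* MulAut (Multiplicative (ZMod m)))
    (N : Subgroup G) [N.Normal]
    (e : (G ⧸ N) ≃* (Multiplicative (ZMod m) ⋊[φ] Multiplicative (ZMod m)))
    (d E : ℕ)
    (hd : IsGreatest {k : ℕ | ∃ S : Multiset G, Multiset.card S = k ∧ ProductOneFree S} d)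
    (hE : IsLeast {l : ℕ | ∀ S : Multiset G, l ≤ Multiset.card S →
      ∃ T ≤ S, Multiset.card T = Fintype.card G ∧ IsProductOne T} E) :
    Fintype.card G + d ≤ E ∧ E ≤ Fintype.card G + Fintype.card G / m + m - 2 := by
  refine ⟨lower_bound d E hd hE, hE.2 ?_⟩
  intro S hS
  refine upper_aux _ (upper_bound m hm φ N e) S (le_trans ?_ hS)
  have h1 : 0 < Fintype.card G := Fintype.card_pos
  have h2 : m ∣ Fintype.card G := by
    rw [← Nat.card_eq_fintype_card, Subgroup.card_eq_card_quotient_mul_card_subgroup N,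
      Nat.card_congr e.toEquiv, Nat.card_congr SemidirectProduct.equivProd, Nat.card_prod]
    have : Nat.card (Multiplicative (ZMod m)) = m := Nat.card_zmod m
    rw [this, mul_assoc]
    exact Dvd.intro _ rfl
  have h3 : 0 < Fintype.card G / m := Nat.div_pos (Nat.le_of_dvd h1 h2) hm
  omega
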